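/- arXiv:1909.06421 — 4 statements merged into one kernel-verified Lean document; each statement's English description precedes it below -/
import Mathlib

section
/- Let d ≥ 2, l > 0, and let γ : [0,1] → ℝ^d be a curve of class H² with constant speed |γ'(t)| = l for all t. Then for every ε > 0 there exists η > 0 (depending on γ, l, ε) with the following property: for every δ ∈ (0, l] and every curve σ : [1, 1 + δ/l] → ℝ^d of class H² with σ(1) = γ(1), σ'(1) = γ'(1), constant speed |σ'(x)| = l for all x (so that σ has length δ), and elastic energy l^{-3} ∫₁^{1+δ/l} |σ''(x)|² dx + δ ≤ η, the curve γ_σ : [0,1] → ℝ^d defined by γ_σ(t) = (γ * σ)((1 + δ/l) t), where γ * σ : [0, 1 + δ/l] → ℝ^d is the concatenation equal to γ on [0,1] and to σ on [1, 1 + δ/l], satisfies ‖γ − γ_σ‖_{H²(0,1)} ≤ ε. -/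
open MeasureTheory Set

/-!
Write `m = 1 + δ / l`. Both conditions `δ ≤ η` and `∫ ‖σ''‖² ≤ l³ η` follow from the energy bound,
so `m` is close to `1` and `σ''` is small in `L²`. The three parts of the `H²` norm are bounded as
follows.

* Values: the concatenation is `l`-Lipschitz and `|t - m t| ≤ δ / l`, so they differ by at most `δ`.
* First derivatives: `γ'` is uniformly continuous, `σ'` stays close to `σ' 1 = γ' 1` because
  `∫ ‖σ''‖ ≤ δ / l + ∫ ‖σ''‖²`, and the factor `m` costs at most `(m - 1) l = δ`.
* Second derivatives: this is the `L²`-continuity of dilations. By density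
  (`exists_uniform_approx`), `γ''` extended by zero is `L²`-close to a bounded uniformly continuous
  `g`, and `g t - m² g (m t)` is uniformly small. The errors are transported by the change of
  variables `t ↦ m t`, which does not increase integrals of nonnegative functions as `m ≥ 1`
  (`integral_le_of_dilation_bound`).
-/

section

variable {E : Type*} [NormedAddCommGroup E]

lemma memLp_two_indicator {a b : ℝ} (hab : a ≤ b) {f : ℝ → E}
    (h1 : IntervalIntegrable f volume a b)
    (h2 : IntervalIntegrable (fun t => ‖f t‖ ^ 2) volume a b) :
    MemLp (indicator (Ioc a b) f) 2 volume := by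
  rw [intervalIntegrable_iff_integrableOn_Ioc_of_le hab] at h1 h2
  rw [memLp_indicator_iff_restrict measurableSet_Ioc]
  exact (memLp_two_iff_integrable_sq_norm h1.1).2 h2

variable [NormedSpace ℝ E]

/-- An `L²` function on the line is approximated in `L²` by a function `g` which is bounded and
uniformly continuous. -/
lemma exists_uniform_approx {G : ℝ → E} (hG : MemLp G 2 volume) {κ : ℝ} (hκ : 0 < κ) :
    ∃ g : ℝ → E, Integrable (fun x => ‖G x - g x‖ ^ 2) ∧ ∫ x, ‖G x - g x‖ ^ 2 ≤ κ ∧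
      UniformContinuous g ∧ ∃ M > (0 : ℝ), ∀ x, ‖g x‖ ≤ M := by
  have h2 : ENNReal.ofReal 2 = 2 := by simp
  obtain ⟨g, hs, hle, hc, hm⟩ :=
    MemLp.exists_hasCompactSupport_integral_rpow_sub_le (p := 2) (by norm_num)
      (by rwa [h2]) hκ
  rw [h2] at hm
  have hd : MemLp (G - g) 2 volume := hG.sub hm
  obtain ⟨M, hM⟩ := hc.bounded_above_of_compact_support hs
  refine ⟨g, ?_, ?_, hc.uniformContinuous_of_tendsto_cocompact hs.is_zero_at_infty,
    max M 1, by positivity, fun x => (hM x).trans (le_max_left _ _)⟩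
  · simpa using (memLp_two_iff_integrable_sq_norm hd.1).1 hd
  · simpa using hle

/-- The splitting
`a - c (b + s) = (a - g) + (g - c h) - c (b - h) - c s` with each square estimated separately. -/
lemma sq_norm_sub_smul_le {a b s g h : E} {c k : ℝ} (hc : 0 ≤ c) (hc4 : c ≤ 4)
    (hk : ‖g - c • h‖ ≤ k) :
    ‖a - c • (b + s)‖ ^ 2 ≤
      4 * k ^ 2 + 4 * ‖a - g‖ ^ 2 + 64 * ‖b - h‖ ^ 2 + 64 * ‖s‖ ^ 2 := by
  have e : a - c • (b + s) = (a - g) + (g - c • h) - c • (b - h) - c • s := by module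
  have t : ‖a - c • (b + s)‖ ≤ ‖a - g‖ + k + 4 * ‖b - h‖ + 4 * ‖s‖ := by
    rw [e]
    have n1 := norm_sub_le ((a - g) + (g - c • h) - c • (b - h)) (c • s)
    have n2 := norm_sub_le ((a - g) + (g - c • h)) (c • (b - h))
    have n3 := norm_add_le (a - g) (g - c • h)
    rw [norm_smul, Real.norm_of_nonneg hc] at n1 n2
    have := mul_le_mul_of_nonneg_right hc4 (norm_nonneg s)
    have := mul_le_mul_of_nonneg_right hc4 (norm_nonneg (b - h))
    linarith
  have := pow_le_pow_left₀ (norm_nonneg _) t 2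
  nlinarith [sq_nonneg (‖a - g‖ - k), sq_nonneg (‖a - g‖ - 4 * ‖b - h‖),
    sq_nonneg (‖a - g‖ - 4 * ‖s‖), sq_nonneg (k - 4 * ‖b - h‖), sq_nonneg (k - 4 * ‖s‖),
    sq_nonneg (4 * ‖b - h‖ - 4 * ‖s‖)]

lemma integral_comp_dilation_le {P : ℝ → ℝ} (hP : ∀ x, 0 ≤ P x) {m : ℝ} (hm : 1 ≤ m) :
    ∫ x, P (m * x) ≤ ∫ x, P x := by
  rw [Measure.integral_comp_mul_left, smul_eq_mul, abs_of_nonneg (by positivity)]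
  exact mul_le_of_le_one_left (integral_nonneg hP) (inv_le_one_of_one_le₀ hm)

/-- No integrability of `F` is needed: `F` is nonnegative and has an integrable majorant. -/
lemma integral_le_of_dilation_bound {F P Q : ℝ → ℝ} {C m : ℝ} (hm : 1 ≤ m)
    (hF : ∀ x, 0 ≤ F x) (hP : ∀ x, 0 ≤ P x) (hQ : ∀ x, 0 ≤ Q x)
    (iP : Integrable P) (iQ : Integrable Q)
    (h : ∀ t ∈ Ioc (0 : ℝ) 1, F t ≤ C + 4 * P t + 64 * P (m * t) + 64 * Q (m * t)) :
    ∫ t in (0 : ℝ)..1, F t ≤ C + 68 * (∫ x, P x) + 64 * ∫ x, Q x := by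
  have hm0 : m ≠ 0 := by positivity
  have i2 := iP.comp_mul_left' hm0
  have i3 := iQ.comp_mul_left' hm0
  have j0 : Integrable (fun _ : ℝ => C) (volume.restrict (Ioc (0 : ℝ) 1)) := integrable_const C
  have j1 := (iP.const_mul 4).restrict (s := Ioc (0 : ℝ) 1)
  have j2 := (i2.const_mul 64).restrict (s := Ioc (0 : ℝ) 1)
  have j3 := (i3.const_mul 64).restrict (s := Ioc (0 : ℝ) 1)
  rw [intervalIntegral.integral_of_le zero_le_one]
  have key := integral_mono_of_nonneg (μ := volume.restrict (Ioc (0 : ℝ) 1))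
    (Filter.Eventually.of_forall hF) (((j0.add j1).add j2).add j3)
    ((ae_restrict_iff' measurableSet_Ioc).2 (Filter.Eventually.of_forall h))
  rw [integral_add' ((j0.add j1).add j2) j3, integral_add' (j0.add j1) j2,
    integral_add' j0 j1, integral_const_mul, integral_const_mul, integral_const_mul] at key
  have k0 : ∫ _ in Ioc (0 : ℝ) 1, C = C := by simp
  have k1 := setIntegral_le_integral (s := Ioc (0 : ℝ) 1) iP (Filter.Eventually.of_forall hP)
  have k2 := setIntegral_le_integral (s := Ioc (0 : ℝ) 1) i2
    (Filter.Eventually.of_forall fun x => hP (m * x))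
  have k3 := setIntegral_le_integral (s := Ioc (0 : ℝ) 1) i3
    (Filter.Eventually.of_forall fun x => hQ (m * x))
  have l2 := integral_comp_dilation_le hP hm
  have l3 := integral_comp_dilation_le hQ hm
  linarith

/-- Cauchy–Schwarz is avoided through the pointwise bound `‖f‖ ≤ 1 + ‖f‖²`. -/
lemma norm_integral_le_length_add {a b x : ℝ} (hx : x ∈ Icc a b) {f : ℝ → E}
    (h2 : IntervalIntegrable (fun t => ‖f t‖ ^ 2) volume a b) :
    ‖∫ s in a..x, f s‖ ≤ (b - a) + ∫ s in a..b, ‖f s‖ ^ 2 := by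
  have hab : a ≤ b := hx.1.trans hx.2
  have i1 : IntervalIntegrable (fun t => 1 + ‖f t‖ ^ 2) volume a b :=
    intervalIntegrable_const.add h2
  have i1' : IntervalIntegrable (fun t => 1 + ‖f t‖ ^ 2) volume a x :=
    i1.mono_set (by rw [uIcc_of_le hab, uIcc_of_le hx.1]; exact Icc_subset_Icc_right hx.2)
  calc ‖∫ s in a..x, f s‖ ≤ ∫ s in a..x, (1 + ‖f s‖ ^ 2) :=
        intervalIntegral.norm_integral_le_of_norm_le hx.1
          (Filter.Eventually.of_forall fun t _ => by nlinarith [sq_nonneg (‖f t‖ - 1)]) i1'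
    _ ≤ ∫ s in a..b, (1 + ‖f s‖ ^ 2) :=
        intervalIntegral.integral_mono_interval le_rfl hx.1 hx.2
          (Filter.Eventually.of_forall fun t => by positivity) i1
    _ = (b - a) + ∫ s in a..b, ‖f s‖ ^ 2 := by
        rw [intervalIntegral.integral_add intervalIntegrable_const h2]; simp

lemma norm_sub_le_of_speed {f f' : ℝ → E} {a b l : ℝ}
    (hf : ∀ t ∈ Icc a b, HasDerivWithinAt f (f' t) (Icc a b) t)
    (hs : ∀ t ∈ Icc a b, ‖f' t‖ = l) {x y : ℝ} (hx : x ∈ Icc a b) (hy : y ∈ Icc a b)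
    (hxy : x ≤ y) : ‖f x - f y‖ ≤ l * (y - x) := by
  have := (convex_Icc a b).norm_image_sub_le_of_norm_hasDerivWithin_le hf
    (fun t ht => (hs t ht).le) hx hy
  rwa [norm_sub_rev, Real.norm_of_nonneg (sub_nonneg.2 hxy)] at this

lemma norm_sub_sq_smul_le {u v : E} {m M e : ℝ} (hm1 : 1 ≤ m) (hm2 : m ≤ 2)
    (huv : ‖u - v‖ ≤ e) (hv : ‖v‖ ≤ M) (hM : 3 * M * (m - 1) ≤ e) :
    ‖u - (m ^ 2) • v‖ ≤ 2 * e := by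
  have d2 : u - (m ^ 2) • v = (u - v) - (m ^ 2 - 1) • v := by module
  have d3 := norm_sub_le (u - v) ((m ^ 2 - 1) • v)
  have d4 : 0 ≤ m ^ 2 - 1 := by nlinarith
  have d5 : m ^ 2 - 1 ≤ 3 * (m - 1) := by nlinarith
  have d6 := mul_le_mul d5 hv (norm_nonneg _) (by linarith)
  rw [norm_smul, Real.norm_of_nonneg d4] at d3
  rw [d2]
  linarith

end

/-- Let `γ : [0,1] → ℝ^d` be an `H²` curve with constant speed `l > 0`.
For every `ε > 0` there is `η > 0` such that for every `δ ∈ (0, l]` and every `H²` curve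
`σ : [1, 1+δ/l] → ℝ^d` with constant speed `l`, matching `γ` in value and derivative at `1`,
and with elastic energy `l⁻³ ∫ ‖σ''‖² + δ ≤ η`, the constant-speed reparametrization
`γ_σ(t) = (γ * σ)((1+δ/l) t)` of the concatenation satisfies `‖γ - γ_σ‖_{H²(0,1)} ≤ ε`.
(The first and second derivatives of `γ_σ` are written out explicitly via the chain rule.) -/
theorem concatenation_H2_close
    (d : ℕ) (hd : 2 ≤ d) (l : ℝ) (hl : 0 < l)
    (γ γ' γ'' : ℝ → EuclideanSpace ℝ (Fin d))
    (hderiv : ∀ t ∈ Icc (0:ℝ) 1, HasDerivWithinAt γ (γ' t) (Icc (0:ℝ) 1) t)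
    (hAC : ∀ t ∈ Icc (0:ℝ) 1, γ' t = γ' 0 + ∫ s in (0:ℝ)..t, γ'' s)
    (hint1 : IntervalIntegrable γ'' volume 0 1)
    (hint2 : IntervalIntegrable (fun t => ‖γ'' t‖ ^ 2) volume 0 1)
    (hspeed : ∀ t ∈ Icc (0:ℝ) 1, ‖γ' t‖ = l) :
    ∀ ε > (0:ℝ), ∃ η > (0:ℝ), ∀ δ : ℝ, 0 < δ → δ ≤ l →
      ∀ σ σ' σ'' : ℝ → EuclideanSpace ℝ (Fin d),
        (∀ x ∈ Icc (1:ℝ) (1 + δ / l), HasDerivWithinAt σ (σ' x) (Icc (1:ℝ) (1 + δ / l)) x) →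
        (∀ x ∈ Icc (1:ℝ) (1 + δ / l), σ' x = σ' 1 + ∫ s in (1:ℝ)..x, σ'' s) →
        IntervalIntegrable σ'' volume 1 (1 + δ / l) →
        IntervalIntegrable (fun x => ‖σ'' x‖ ^ 2) volume 1 (1 + δ / l) →
        (∀ x ∈ Icc (1:ℝ) (1 + δ / l), ‖σ' x‖ = l) →
        σ 1 = γ 1 → σ' 1 = γ' 1 →
        (l ^ 3)⁻¹ * (∫ x in (1:ℝ)..(1 + δ / l), ‖σ'' x‖ ^ 2) + δ ≤ η →
        Real.sqrt (∫ t in (0:ℝ)..1,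
          (‖γ t - (if (1 + δ / l) * t ≤ 1 then γ ((1 + δ / l) * t)
              else σ ((1 + δ / l) * t))‖ ^ 2
          + ‖γ' t - (1 + δ / l) • (if (1 + δ / l) * t ≤ 1 then γ' ((1 + δ / l) * t)
              else σ' ((1 + δ / l) * t))‖ ^ 2
          + ‖γ'' t - ((1 + δ / l) ^ 2) • (if (1 + δ / l) * t ≤ 1 then γ'' ((1 + δ / l) * t)
              else σ'' ((1 + δ / l) * t))‖ ^ 2)) ≤ ε := by
  intro ε hε
  -- The final estimate is `(26 + 68 + 64) e² = 158 e² ≤ ε²`.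
  set e : ℝ := ε / 13 with he
  have e0 : 0 < e := by positivity
  set G : ℝ → EuclideanSpace ℝ (Fin d) := indicator (Ioc 0 1) γ'' with hG
  obtain ⟨g, ig, hgκ, guc, M, hM0, hM⟩ :=
    exists_uniform_approx (memLp_two_indicator zero_le_one hint1 hint2) (pow_pos e0 2)
  have hcont : ContinuousOn γ' (Icc 0 1) := by
    have h := intervalIntegral.continuousOn_primitive_interval' hint1 left_mem_uIcc
    rw [uIcc_of_le zero_le_one] at h
    exact (continuousOn_const.add h).congr hAC
  obtain ⟨r₁, hr₁, hu₁⟩ := Metric.uniformContinuousOn_iff.1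
    (isCompact_Icc.uniformContinuousOn_of_continuous hcont) e e0
  obtain ⟨r₂, hr₂, hu₂⟩ := Metric.uniformContinuous_iff.1 guc e e0
  obtain ⟨η, hη0, hη⟩ : ∃ η > (0 : ℝ), η ≤ e ∧ η ≤ l * (r₁ / 2) ∧ η ≤ l * (r₂ / 2) ∧
      η ≤ l * (e / 2) ∧ l ^ 3 * η ≤ e / 2 ∧ l ^ 3 * η ≤ e ^ 2 ∧ η ≤ l * (e / (3 * M)) := by
    have l3 : 0 < l ^ 3 := by positivity
    refine ⟨min e (min (l * (r₁ / 2)) (min (l * (r₂ / 2)) (min (l * (e / 2))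
      (min (e / 2 / l ^ 3) (min (e ^ 2 / l ^ 3) (l * (e / (3 * M)))))))), by positivity, ?_⟩
    simp only [← le_div_iff₀' l3]
    simp only [min_le_iff, le_refl, true_or, or_true, and_self]
  obtain ⟨η1, η2, η3, η4, η5, η6, η7⟩ := hη
  refine ⟨η, hη0, ?_⟩
  intro δ hδ0 hδl σ σ' σ'' hσ hσAC hσ1 hσ2 hσs h0 h1 hE
  set m : ℝ := 1 + δ / l with hm
  have q0 : 0 < δ / l := by positivity
  have q1 : δ / l ≤ 1 := (div_le_one hl).2 hδl
  have ql : δ / l * l = δ := div_mul_cancel₀ _ hl.ne'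
  have m1 : 1 ≤ m := by linarith
  have m2 : m ≤ 2 := by linarith
  have hm4 : m ^ 2 ≤ 4 := (pow_le_pow_left₀ (by linarith) m2 2).trans (by norm_num)
  set J : ℝ := ∫ x in (1:ℝ)..m, ‖σ'' x‖ ^ 2 with hJ
  have J0 : 0 ≤ J := intervalIntegral.integral_nonneg m1 fun _ _ => by positivity
  have hδη : δ ≤ η := by
    have : 0 ≤ (l ^ 3)⁻¹ * J := by positivity
    linarith
  have hJη : J ≤ l ^ 3 * η := by
    rw [← inv_mul_le_iff₀ (by positivity)]
    linarith
  have qle : ∀ {c : ℝ}, η ≤ l * c → δ / l ≤ c := fun h => by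
    rw [div_le_iff₀' hl]; linarith
  have qr₁ := qle η2
  have qr₂ := qle η3
  have qe := qle η4
  have qM : 3 * M * (δ / l) ≤ e := by
    have := qle η7
    rwa [le_div_iff₀' (by positivity)] at this
  set S : ℝ → EuclideanSpace ℝ (Fin d) := indicator (Ioc 1 m) σ'' with hS
  have hSL := memLp_two_indicator m1 hσ1 hσ2
  have iS : Integrable fun x => ‖S x‖ ^ 2 := (memLp_two_iff_integrable_sq_norm hSL.1).1 hSL
  have hSJ : ∫ x, ‖S x‖ ^ 2 = J := by
    rw [hJ, intervalIntegral.integral_of_le m1, ← integral_indicator measurableSet_Ioc]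
    congr 1 with x
    by_cases hx : x ∈ Ioc 1 m <;> simp [hS, hx]
  have key := integral_le_of_dilation_bound (C := e ^ 2 + (3 * e) ^ 2 + 4 * (2 * e) ^ 2) m1
    (F := fun t => ‖γ t - (if m * t ≤ 1 then γ (m * t) else σ (m * t))‖ ^ 2
          + ‖γ' t - m • (if m * t ≤ 1 then γ' (m * t) else σ' (m * t))‖ ^ 2
          + ‖γ'' t - (m ^ 2) • (if m * t ≤ 1 then γ'' (m * t) else σ'' (m * t))‖ ^ 2)
    (fun _ => by positivity) (fun _ => by positivity) (fun _ => by positivity) ig iS ?_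
  · rw [hSJ] at key
    refine Real.sqrt_le_iff.2 ⟨hε.le, key.trans ?_⟩
    have : ε = 13 * e := by rw [he]; ring
    rw [this]
    nlinarith
  intro t ht
  have mt0 : 0 < m * t := mul_pos (by linarith) ht.1
  have mtt : m * t - t ≤ δ / l := by
    have : m * t - t = δ / l * t := by rw [hm]; ring
    rw [this]; exact mul_le_of_le_one_right q0.le ht.2
  have tmt : t ≤ m * t := le_mul_of_one_le_left ht.1.le m1
  have mtm : m * t ≤ m := mul_le_of_le_one_right (by linarith) ht.2
  have htI : t ∈ Icc (0 : ℝ) 1 := Ioc_subset_Icc_self ht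
  have one0 : (1 : ℝ) ∈ Icc (0 : ℝ) 1 := ⟨zero_le_one, le_rfl⟩
  have onem : (1 : ℝ) ∈ Icc (1 : ℝ) m := ⟨le_rfl, m1⟩
  have hγ'u : ∀ x ∈ Icc (0 : ℝ) 1, t ≤ x → x ≤ m * t → ‖γ' t - γ' x‖ ≤ e := by
    intro x hx h1 h2
    rw [← dist_eq_norm]
    refine (hu₁ t htI x hx ?_).le
    rw [Real.dist_eq, abs_sub_comm, abs_of_nonneg (by linarith)]
    linarith
  have A : ‖γ t - (if m * t ≤ 1 then γ (m * t) else σ (m * t))‖ ≤ e := by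
    have hlt : l * (m * t - t) ≤ e := by
      have := mul_le_mul_of_nonneg_left mtt hl.le
      linarith
    split_ifs with hc
    · exact (norm_sub_le_of_speed hderiv hspeed htI ⟨mt0.le, hc⟩ tmt).trans hlt
    · have a1 := norm_sub_le_of_speed hderiv hspeed htI one0 ht.2
      have a2 := norm_sub_le_of_speed hσ hσs onem ⟨(not_le.1 hc).le, mtm⟩ (not_le.1 hc).le
      rw [h0] at a2
      have a3 := norm_sub_le_norm_sub_add_norm_sub (γ t) (γ 1) (σ (m * t))
      linarith
  have B : ‖γ' t - m • (if m * t ≤ 1 then γ' (m * t) else σ' (m * t))‖ ≤ 3 * e := by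
    obtain ⟨v, hv, hvl, hvd⟩ : ∃ v, (if m * t ≤ 1 then γ' (m * t) else σ' (m * t)) = v ∧
        ‖v‖ = l ∧ ‖γ' t - v‖ ≤ 2 * e := by
      refine ⟨_, rfl, ?_⟩
      split_ifs with hc
      · have := hγ'u _ ⟨mt0.le, hc⟩ tmt le_rfl
        exact ⟨hspeed _ ⟨mt0.le, hc⟩, by linarith⟩
      · have hmt : m * t ∈ Icc 1 m := ⟨(not_le.1 hc).le, mtm⟩
        refine ⟨hσs _ hmt, ?_⟩
        have b1 := hγ'u 1 one0 ht.2 hmt.1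
        have b2 := norm_integral_le_length_add hmt hσ2
        have b3 : γ' 1 - σ' (m * t) = -∫ s in (1:ℝ)..(m * t), σ'' s := by
          rw [hσAC _ hmt, h1]; abel
        rw [← norm_neg, ← b3] at b2
        have b4 := norm_sub_le_norm_sub_add_norm_sub (γ' t) (γ' 1) (σ' (m * t))
        linarith
    rw [hv]
    have e1 : γ' t - m • v = (γ' t - v) - (δ / l) • v := by rw [hm]; module
    have e2 := norm_sub_le (γ' t - v) ((δ / l) • v)
    rw [norm_smul, hvl, Real.norm_of_nonneg q0.le, ql] at e2
    rw [e1]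
    linarith
  have D : ‖g t - (m ^ 2) • g (m * t)‖ ≤ 2 * e := by
    have d1 : ‖g t - g (m * t)‖ ≤ e := by
      rw [← dist_eq_norm]
      refine (hu₂ ?_).le
      rw [Real.dist_eq, abs_sub_comm, abs_of_nonneg (by linarith)]
      linarith
    exact norm_sub_sq_smul_le m1 m2 d1 (hM _) (by rwa [hm, add_sub_cancel_left])
  have W : (if m * t ≤ 1 then γ'' (m * t) else σ'' (m * t)) = G (m * t) + S (m * t) := by
    split_ifs with hc
    · simp [hG, hS, mt0, hc, not_lt.2 hc]
    · simp [hG, hS, hc, not_le.1 hc, mtm]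
  have Gt : γ'' t = G t := by rw [hG, indicator_of_mem ht]
  have T := sq_norm_sub_smul_le (a := G t) (b := G (m * t)) (s := S (m * t))
    (sq_nonneg m) hm4 D
  have A2 := pow_le_pow_left₀ (norm_nonneg _) A 2
  have B2 := pow_le_pow_left₀ (norm_nonneg _) B 2
  simp only [W, Gt]
  linarith
end

section
/- Let γ : [0,1] → ℝ² be an injective, regular (γ'(t) ≠ 0 for all t), real-analytic curve with γ(0) = (0,0) and γ(1) = (a, 0) for some a > 0. Then there exists t ∈ [0,1] such that the unit tangent vector is horizontal and points in the positive direction: γ'(t)/|γ'(t)| = (1, 0). -/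
open Set

/-!
The proof combines a reduction to arcs over a chord with Hopf's secant-map argument.

*Reduction.* The height `y = γ₁` is real analytic, so either it vanishes identically on `[0,1]` or
it has finitely many zeros there. In the first case the curve runs along the horizontal axis and,
as it ends to the right of its start, the mean value theorem gives a point where it moves to the
right. In the second case let `q` be the first zero of `y` at which `γ₀ > 0`, and `p` the last zero
before `q`. Then `γ₀ p ≤ 0 < γ₀ q` and `y` has constant sign on `(p, q)`; after a reflection the arc
lies above its chord, which points in the positive direction.

*Arcs above a chord* (`exists_tangent_of_arc_above_chord`). The difference quotient
`f (s, t) = (g t - g s) / (t - s)`, extended by `g' t` to the diagonal, is continuous, and it does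
not vanish because the arc is injective and regular, so it has a continuous logarithm on the plane;
let `φ` be its imaginary part. If the tangent never pointed in the positive direction, then, after a
shift by a multiple of `2π`, `φ (t, t) ∈ (0, 2π)` for all `t`. The secants from the left endpoint
point upwards, so `φ (p, ·)` stays in `[0, π]`; the secants to the right endpoint point downwards,
so `φ (·, q)` stays in `[π, 2π]`. Hence `φ (p, q) = π`, although `g q - g p` points in the positive
direction.
-/

open Filter Topology

/-- A continuous nowhere vanishing complex function on the plane has a continuous logarithm. -/
lemma exists_continuous_log (f : ℝ × ℝ → ℂ) (hf : Continuous f) (h0 : ∀ z, f z ≠ 0) :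
    ∃ L : ℝ × ℝ → ℂ, Continuous L ∧ ∀ z, Complex.exp (L z) = f z := by
  have : LocallyPathConnectedSpace (ℝ × ℝ) := inferInstance
  have : ContractibleSpace (ℝ × ℝ) := inferInstance
  obtain ⟨L, ⟨-, hL⟩, -⟩ := Complex.isCoveringMapOn_exp.existsUnique_continuousMap_lifts
    (⟨f, hf⟩ : C(ℝ × ℝ, ℂ)) (a₀ := (0, 0)) (e₀ := Complex.log (f (0, 0)))
    (by simp [Complex.exp_log (h0 _)]) (by simpa using h0)
  exact ⟨L, L.continuous, fun z => congrFun hL z⟩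

/-- A continuous angle whose sine is nonnegative cannot leave `[0, π]`. -/
lemma angle_mem_of_sin_nonneg {p q x₀ : ℝ} {ψ : ℝ → ℝ} (hψ : Continuous ψ)
    (hsin : ∀ x ∈ Icc p q, 0 ≤ Real.sin (ψ x)) (hx₀ : x₀ ∈ Icc p q)
    (h₀ : ψ x₀ ∈ Ioo (-Real.pi) (2 * Real.pi)) :
    ∀ x ∈ Icc p q, ψ x ∈ Icc 0 Real.pi := by
  have hpi := Real.pi_pos
  have hneg : ∀ θ, Real.pi < θ → θ < 2 * Real.pi → Real.sin θ < 0 := fun θ h1 h2 => by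
    have := Real.sin_neg_of_neg_of_neg_pi_lt (x := θ - 2 * Real.pi) (by linarith) (by linarith)
    rwa [Real.sin_sub_two_pi] at this
  have hlow : 0 ≤ ψ x₀ := by
    by_contra! h
    exact (hsin x₀ hx₀).not_gt (Real.sin_neg_of_neg_of_neg_pi_lt h h₀.1)
  have hup : ψ x₀ ≤ Real.pi := by
    by_contra! h
    exact (hsin x₀ hx₀).not_gt (hneg _ h h₀.2)
  have hconn : OrdConnected (ψ '' Icc p q) :=
    (isPreconnected_Icc.image ψ hψ.continuousOn).ordConnected
  intro x hx
  have hmx := mem_image_of_mem ψ hx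
  have hm₀ := mem_image_of_mem ψ hx₀
  constructor
  · by_contra! h
    obtain ⟨y, hy, hyv⟩ := hconn.out hmx hm₀
      (show max (ψ x) (-(Real.pi / 2)) ∈ _ from
        ⟨le_max_left _ _, (max_le h.le (by linarith)).trans hlow⟩)
    refine (hsin y hy).not_gt (Real.sin_neg_of_neg_of_neg_pi_lt ?_ ?_)
    · rw [hyv]; exact max_lt h (by linarith)
    · rw [hyv]; exact lt_max_of_lt_right (by linarith)
  · by_contra! h
    obtain ⟨y, hy, hyv⟩ := hconn.out hm₀ hmx
      (show min (ψ x) (3 * Real.pi / 2) ∈ _ from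
        ⟨hup.trans (le_min h.le (by linarith)), min_le_left _ _⟩)
    refine (hsin y hy).not_gt (hneg _ ?_ ?_)
    · rw [hyv]; exact lt_min h (by linarith)
    · rw [hyv]; exact min_lt_of_right_lt (by linarith)

/-- A continuous angle that is never a multiple of `2π` stays between two consecutive multiples. -/
lemma exists_angle_shift {p q : ℝ} (hpq : p ≤ q) {ψ : ℝ → ℝ} (hψ : Continuous ψ)
    (h : ∀ x ∈ Icc p q, ∀ k : ℤ, ψ x ≠ k * (2 * Real.pi)) :
    ∃ k : ℤ, ∀ x ∈ Icc p q, ψ x - k * (2 * Real.pi) ∈ Ioo 0 (2 * Real.pi) := by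
  have hpi : 0 < 2 * Real.pi := Real.two_pi_pos
  have hconn : OrdConnected (ψ '' Icc p q) :=
    (isPreconnected_Icc.image ψ hψ.continuousOn).ordConnected
  have hmp := mem_image_of_mem ψ (left_mem_Icc.2 hpq)
  set k := ⌊ψ p / (2 * Real.pi)⌋ with hk
  have h1 : k * (2 * Real.pi) ≤ ψ p := by
    rw [← le_div_iff₀ hpi]; exact Int.floor_le _
  have h2 : ψ p ≤ ((k + 1 : ℤ) : ℝ) * (2 * Real.pi) := by
    rw [← div_le_iff₀ hpi]; push_cast; exact (Int.lt_floor_add_one _).le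
  refine ⟨k, fun x hx => ?_⟩
  have hmx := mem_image_of_mem ψ hx
  constructor
  · by_contra! hlt
    obtain ⟨y, hy, hyv⟩ := hconn.out hmx hmp ⟨by linarith, h1⟩
    exact h y hy k hyv
  · by_contra! hlt
    obtain ⟨y, hy, hyv⟩ := hconn.out hmp hmx ⟨h2, by push_cast; linarith⟩
    exact h y hy (k + 1) hyv

/-- The secant map of an injective regular `C¹` arc, extended to the diagonal by the derivative,
is the restriction of a continuous nowhere vanishing function on the plane. -/
lemma exists_secant_map {g g' : ℝ → ℂ} {p q : ℝ} (hpq : p ≤ q)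
    (hg : ∀ x ∈ Icc p q, HasDerivAt g (g' x) x) (hg' : ContinuousOn g' (Icc p q))
    (hinj : InjOn g (Icc p q)) (hne : ∀ x ∈ Icc p q, g' x ≠ 0) :
    ∃ f : ℝ × ℝ → ℂ, Continuous f ∧ (∀ z, f z ≠ 0) ∧ (∀ x ∈ Icc p q, f (x, x) = g' x) ∧
      ∀ s ∈ Icc p q, ∀ t ∈ Icc p q, (t - s) • f (s, t) = g t - g s := by
  set r : ℝ → ℝ := fun x => projIcc p q hpq x with hr
  have hrc : Continuous r := continuous_subtype_val.comp continuous_projIcc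
  have hrm : ∀ x, r x ∈ Icc p q := fun x => (projIcc p q hpq x).2
  have hri : ∀ x ∈ Icc p q, r x = x := fun x hx => by simp [hr, projIcc_of_mem hpq hx]
  have hGc : Continuous (fun x => g' (r x)) := hg'.comp_continuous hrc hrm
  set f : ℝ × ℝ → ℂ := fun z => ∫ w in (0:ℝ)..1, g' (r (r z.1 + (r z.2 - r z.1) * w)) with hf
  have hsec : ∀ s ∈ Icc p q, ∀ t ∈ Icc p q, (t - s) • f (s, t) = g t - g s := by
    intro s hs t ht
    have hsub : uIcc s t ⊆ Icc p q := ordConnected_Icc.uIcc_subset hs ht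
    simp only [hf, hri s hs, hri t ht]
    rw [intervalIntegral.smul_integral_comp_add_mul (fun x => g' (r x))]
    have : ∫ x in s + (t - s) * 0..s + (t - s) * 1, g' (r x) = ∫ x in s..t, g' x := by
      rw [mul_zero, mul_one, add_zero, add_sub_cancel]
      exact intervalIntegral.integral_congr fun x hx => by simp only [hri x (hsub hx)]
    rw [this]
    exact intervalIntegral.integral_eq_sub_of_hasDerivAt (fun x hx => hg x (hsub hx))
      (hg'.mono hsub).intervalIntegrable
  have hdiag : ∀ x ∈ Icc p q, f (x, x) = g' x := fun x hx => by simp [hf, hri x hx]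
  have hfr : ∀ z, f z = f (r z.1, r z.2) := fun z => by
    simp only [hf, hri _ (hrm _)]
  refine ⟨f, ?_, fun z => ?_, hdiag, hsec⟩
  · have harg : Continuous fun zw : (ℝ × ℝ) × ℝ =>
        r zw.1.1 + (r zw.1.2 - r zw.1.1) * zw.2 := by fun_prop
    exact intervalIntegral.continuous_parametric_intervalIntegral_of_continuous'
      (f := fun (z : ℝ × ℝ) (w : ℝ) => g' (r (r z.1 + (r z.2 - r z.1) * w)))
      (hGc.comp harg) 0 1
  · rw [hfr]
    by_cases h : r z.1 = r z.2
    · rw [← h, hdiag _ (hrm _)]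
      exact hne _ (hrm _)
    · intro h0
      have := hsec _ (hrm z.1) _ (hrm z.2)
      rw [h0, smul_zero] at this
      exact h (hinj (hrm _) (hrm _) (sub_eq_zero.1 this.symm).symm)

/-- Hopf's argument: an injective regular `C¹` arc lying above a horizontal chord that points in
the positive direction has a tangent pointing in the positive direction. -/
lemma exists_tangent_of_arc_above_chord {g g' : ℝ → ℂ} {p q : ℝ} (hpq : p < q)
    (hg : ∀ x ∈ Icc p q, HasDerivAt g (g' x) x) (hg' : ContinuousOn g' (Icc p q))
    (hinj : InjOn g (Icc p q)) (hne : ∀ x ∈ Icc p q, g' x ≠ 0)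
    (him : ∀ x ∈ Icc p q, (g p).im ≤ (g x).im) (heq : (g q).im = (g p).im)
    (hre : (g p).re < (g q).re) :
    ∃ x ∈ Icc p q, (g' x).im = 0 ∧ 0 < (g' x).re := by
  by_contra! hcon
  obtain ⟨f, hfc, hf0, hdiag, hsec⟩ := exists_secant_map hpq.le hg hg' hinj hne
  obtain ⟨L, hLc, hL⟩ := exists_continuous_log f hfc hf0
  have hp : p ∈ Icc p q := left_mem_Icc.2 hpq.le
  have hq : q ∈ Icc p q := right_mem_Icc.2 hpq.le
  have hfre : ∀ z, (f z).re = Real.exp (L z).re * Real.cos (L z).im := fun z => by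
    rw [← hL, Complex.exp_re]
  have hfim : ∀ z, (f z).im = Real.exp (L z).re * Real.sin (L z).im := fun z => by
    rw [← hL, Complex.exp_im]
  have hsin : ∀ z, 0 ≤ (f z).im → 0 ≤ Real.sin (L z).im := fun z h => by
    rw [hfim] at h
    exact nonneg_of_mul_nonneg_right h (Real.exp_pos _)
  have hsin' : ∀ z, (f z).im ≤ 0 → Real.sin (L z).im ≤ 0 := fun z h => by
    rw [hfim] at h
    exact nonpos_of_mul_nonpos_right h (Real.exp_pos _)
  -- The tangent angle is never a multiple of `2π`, so it can be normalized to lie in `(0, 2π)`.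
  obtain ⟨k, hk⟩ := exists_angle_shift (ψ := fun x => (L (x, x)).im) hpq.le (by fun_prop)
    (by
      intro x hx m hm
      have h1 := hfre (x, x)
      have h2 := hfim (x, x)
      rw [hdiag x hx, hm] at h1 h2
      rw [Real.cos_int_mul_two_pi, mul_one] at h1
      have h3 : Real.sin (m * (2 * Real.pi)) = 0 := by
        simpa using Real.sin_add_int_mul_two_pi 0 m
      rw [h3, mul_zero] at h2
      exact (hcon x hx h2).not_gt (h1 ▸ Real.exp_pos _))
  -- Secants from the left endpoint point upwards; `x = p` is covered by continuity.
  have hleft : ∀ x ∈ Icc p q, 0 ≤ (f (p, x)).im := by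
    have hcl : IsClosed {x : ℝ | 0 ≤ (f (p, x)).im} := isClosed_le (by fun_prop) (by fun_prop)
    have hsub : Ioc p q ⊆ {x : ℝ | 0 ≤ (f (p, x)).im} := fun x hx => by
      have h := congrArg Complex.im (hsec p hp x (Ioc_subset_Icc_self hx))
      rw [Complex.smul_im, Complex.sub_im, smul_eq_mul] at h
      have := him x (Ioc_subset_Icc_self hx)
      exact nonneg_of_mul_nonneg_right (by rw [h]; linarith) (sub_pos.2 hx.1)
    have := hcl.closure_subset_iff.2 hsub
    rwa [closure_Ioc hpq.ne] at this
  have hright : ∀ x ∈ Icc p q, (f (x, q)).im ≤ 0 := by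
    have hcl : IsClosed {x : ℝ | (f (x, q)).im ≤ 0} := isClosed_le (by fun_prop) (by fun_prop)
    have hsub : Ico p q ⊆ {x : ℝ | (f (x, q)).im ≤ 0} := fun x hx => by
      have h := congrArg Complex.im (hsec x (Ico_subset_Icc_self hx) q hq)
      rw [Complex.smul_im, Complex.sub_im, smul_eq_mul] at h
      have := him x (Ico_subset_Icc_self hx)
      exact nonpos_of_mul_nonpos_right (by rw [h]; linarith) (sub_pos.2 hx.2)
    have := hcl.closure_subset_iff.2 hsub
    rwa [closure_Ico hpq.ne] at this
  have hpi := Real.pi_pos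
  have h1 := angle_mem_of_sin_nonneg (ψ := fun x => (L (p, x)).im - k * (2 * Real.pi))
    (by fun_prop) (fun x hx => by
      rw [Real.sin_sub_int_mul_two_pi]
      exact hsin _ (hleft x hx)) hp
    ⟨by linarith [(hk p hp).1], (hk p hp).2⟩ q hq
  have h2 := angle_mem_of_sin_nonneg (ψ := fun x => (L (x, q)).im - k * (2 * Real.pi) - Real.pi)
    (by fun_prop) (fun x hx => by
      rw [Real.sin_sub_pi, Real.sin_sub_int_mul_two_pi]
      linarith [hsin' _ (hright x hx)]) hq
    ⟨by linarith [(hk q hq).1], by linarith [(hk q hq).2]⟩ p hp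
  have h3 : (L (p, q)).im = Real.pi + k * (2 * Real.pi) := by
    linarith [h1.2, h2.1]
  have h4 := hfre (p, q)
  rw [h3, Real.cos_add_int_mul_two_pi, Real.cos_pi] at h4
  have h5 := congrArg Complex.re (hsec p hp q hq)
  rw [Complex.smul_re, Complex.sub_re, smul_eq_mul, h4] at h5
  have := mul_pos (sub_pos.2 hpq) (Real.exp_pos (L (p, q)).re)
  linarith

/-- A real function analytic on `[0,1]` vanishes identically there or has finitely many zeros. -/
lemma eqOn_zero_or_finite_zeros {y : ℝ → ℝ} (hy : AnalyticOnNhd ℝ y (Icc 0 1)) :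
    EqOn y 0 (Icc 0 1) ∨ {t ∈ Icc (0:ℝ) 1 | y t = 0}.Finite := by
  refine or_iff_not_imp_right.2 fun hinf => ?_
  obtain ⟨x, hx, hacc⟩ :=
    Set.Infinite.exists_accPt_of_subset_isCompact hinf isCompact_Icc (sep_subset _ _)
  rw [accPt_iff_frequently_nhdsNE] at hacc
  exact hy.eqOn_zero_of_preconnected_of_frequently_eq_zero isPreconnected_Icc hx
    (hacc.mono fun z hz => hz.2)

/-- A curve starting at horizontal coordinate `0` and ending at a positive one on the axis `y = 0`
has two consecutive crossings `p < q` of the axis, the second to the right of the first. -/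
lemma exists_consecutive_crossings {X y : ℝ → ℝ}
    (hfin : {t ∈ Icc (0:ℝ) 1 | y t = 0}.Finite) (hX0 : X 0 = 0) (hX1 : 0 < X 1)
    (hy0 : y 0 = 0) (hy1 : y 1 = 0) :
    ∃ p ∈ Icc (0:ℝ) 1, ∃ q ∈ Icc (0:ℝ) 1, p < q ∧ y p = 0 ∧ y q = 0 ∧ X p < X q ∧
      ∀ t ∈ Ioo p q, y t ≠ 0 := by
  obtain ⟨q, ⟨⟨hq, hyq⟩, hXq⟩, hqmin⟩ := Set.exists_min_image
    ({t ∈ Icc (0:ℝ) 1 | y t = 0} ∩ {t | 0 < X t}) id (hfin.subset inter_subset_left)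
    ⟨1, ⟨by simp, hy1⟩, hX1⟩
  have h0q : 0 < q := lt_of_le_of_ne hq.1 (by rintro rfl; exact hXq.ne hX0.symm)
  obtain ⟨p, ⟨⟨hp, hyp⟩, hpq⟩, hpmax⟩ := Set.exists_max_image
    ({t ∈ Icc (0:ℝ) 1 | y t = 0} ∩ {t | t < q}) id (hfin.subset inter_subset_left)
    ⟨0, ⟨by simp, hy0⟩, h0q⟩
  refine ⟨p, hp, q, hq, hpq, hyp, hyq, lt_of_le_of_lt ?_ hXq, fun t ht hyt => ?_⟩
  · by_contra! h
    exact (hqmin p ⟨⟨hp, hyp⟩, h⟩).not_gt hpq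
  · exact (hpmax t ⟨⟨⟨hp.1.trans ht.1.le, ht.2.le.trans hq.2⟩, hyt⟩, ht.2⟩).not_gt ht.1

lemma nonneg_or_nonpos_of_ne_zero {y : ℝ → ℝ} {p q : ℝ} (hc : ContinuousOn y (Icc p q))
    (hp : y p = 0) (hq : y q = 0) (hne : ∀ t ∈ Ioo p q, y t ≠ 0) :
    (∀ t ∈ Icc p q, 0 ≤ y t) ∨ ∀ t ∈ Icc p q, y t ≤ 0 := by
  by_contra! h
  obtain ⟨⟨s, hs, hys⟩, ⟨t, ht, hyt⟩⟩ := h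
  have hmem : ∀ u ∈ Icc p q, y u ≠ 0 → u ∈ Ioo p q := fun u hu h =>
    ⟨lt_of_le_of_ne hu.1 (by rintro rfl; exact h hp),
      lt_of_le_of_ne hu.2 (by rintro rfl; exact h hq)⟩
  have hconn : OrdConnected (y '' Ioo p q) :=
    (isPreconnected_Ioo.image y (hc.mono Ioo_subset_Icc_self)).ordConnected
  obtain ⟨u, hu, hyu⟩ := hconn.out (mem_image_of_mem y (hmem s hs hys.ne))
    (mem_image_of_mem y (hmem t ht hyt.ne')) ⟨hys.le, hyt.le⟩
  exact hne u hu hyu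

/-- The tangent criterion in real coordinates, reduced to the complex arc lemma by identifying
the plane with `ℂ`, after reflecting in the horizontal axis if the curve lies below its chord. -/
lemma exists_tangent_of_coordinates {X Y X' Y' : ℝ → ℝ} (hX0 : X 0 = 0) (hX1 : 0 < X 1)
    (hY0 : Y 0 = 0) (hY1 : Y 1 = 0) (hYa : AnalyticOnNhd ℝ Y (Icc 0 1))
    (hX : ∀ t ∈ Icc (0:ℝ) 1, HasDerivAt X (X' t) t) (hY : ∀ t ∈ Icc (0:ℝ) 1, HasDerivAt Y (Y' t) t)
    (hX' : ContinuousOn X' (Icc 0 1)) (hY' : ContinuousOn Y' (Icc 0 1))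
    (hreg : ∀ t ∈ Icc (0:ℝ) 1, X' t = 0 → Y' t ≠ 0)
    (hinj : ∀ s ∈ Icc (0:ℝ) 1, ∀ t ∈ Icc (0:ℝ) 1, X s = X t → Y s = Y t → s = t) :
    ∃ t ∈ Icc (0:ℝ) 1, Y' t = 0 ∧ 0 < X' t := by
  rcases eqOn_zero_or_finite_zeros hYa with hzero | hfin
  · obtain ⟨c, hc, hc'⟩ := exists_hasDerivAt_eq_slope X X' zero_lt_one
      (fun t ht => (hX t ht).continuousAt.continuousWithinAt)
      (fun t ht => hX t (Ioo_subset_Icc_self ht))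
    refine ⟨c, Ioo_subset_Icc_self hc, ?_, by rw [hc', hX0]; simpa using hX1⟩
    have hev : Y =ᶠ[𝓝 c] fun _ => 0 := by
      filter_upwards [Icc_mem_nhds hc.1 hc.2] with t ht using hzero ht
    exact (hY c (Ioo_subset_Icc_self hc)).unique ((hasDerivAt_const c (0:ℝ)).congr_of_eventuallyEq hev)
  obtain ⟨p, hp, q, hq, hpq, hyp, hyq, hXpq, hne⟩ :=
    exists_consecutive_crossings hfin hX0 hX1 hY0 hY1
  have hsub : Icc p q ⊆ Icc 0 1 := Icc_subset_Icc hp.1 hq.2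
  have hYc : ContinuousOn Y (Icc p q) := fun t ht =>
    (hY t (hsub ht)).continuousAt.continuousWithinAt
  -- `ε = ±1` is the sign of the height of the arc.
  obtain ⟨ε, hε, hpos⟩ : ∃ ε : ℝ, ε ≠ 0 ∧ ∀ t ∈ Icc p q, 0 ≤ ε * Y t := by
    rcases nonneg_or_nonpos_of_ne_zero hYc hyp hyq hne with h | h
    · exact ⟨1, one_ne_zero, fun t ht => by linarith [h t ht]⟩
    · exact ⟨-1, by norm_num, fun t ht => by linarith [h t ht]⟩
  obtain ⟨t, ht, h1, h2⟩ := exists_tangent_of_arc_above_chord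
    (g := fun t => (X t : ℂ) + ((ε * Y t : ℝ) : ℂ) * Complex.I)
    (g' := fun t => (X' t : ℂ) + ((ε * Y' t : ℝ) : ℂ) * Complex.I) hpq
    (fun t ht => (hX t (hsub ht)).ofReal_comp.add
      ((((hY t (hsub ht)).const_mul ε).ofReal_comp).mul_const _))
    (by
      have := hX'.mono hsub
      have := hY'.mono hsub
      fun_prop)
    (fun s hs t ht hst => by
      have h1 := congrArg Complex.re hst
      have h2 := congrArg Complex.im hst
      simp at h1 h2
      exact hinj s (hsub hs) t (hsub ht) h1 (h2.resolve_right hε))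
    (fun t ht h => by
      have h1 := congrArg Complex.re h
      have h2 := congrArg Complex.im h
      simp at h1 h2
      exact hreg t (hsub ht) h1 (h2.resolve_left hε))
    (fun t ht => by simpa [hyp] using hpos t ht)
    (by simp [hyp, hyq]) (by simpa using hXpq)
  simp at h1 h2
  exact ⟨t, hsub ht, h1.resolve_left hε, h2⟩

/-- An injective, regular, real-analytic planar curve from the origin to
`(a, 0)` with `a > 0` has, at some parameter `t ∈ [0,1]`, unit tangent vector equal to
`(1,0)` (expressed by: the tangent has vanishing second component and first component equal
to its norm). -/
theorem exists_horizontal_tangent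
    (γ : ℝ → EuclideanSpace ℝ (Fin 2)) (a : ℝ) (ha : 0 < a)
    (hanalytic : ∀ t ∈ Icc (0:ℝ) 1, AnalyticAt ℝ γ t)
    (hreg : ∀ t ∈ Icc (0:ℝ) 1, deriv γ t ≠ 0)
    (hinj : InjOn γ (Icc (0:ℝ) 1))
    (h0 : γ 0 = 0)
    (h1a : (γ 1) 0 = a) (h1b : (γ 1) 1 = 0) :
    ∃ t ∈ Icc (0:ℝ) 1, (deriv γ t) 0 = ‖deriv γ t‖ ∧ (deriv γ t) 1 = 0 := by
  set P : Fin 2 → (EuclideanSpace ℝ (Fin 2) →L[ℝ] ℝ) := fun i => EuclideanSpace.proj i with hP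
  have hcoord : ∀ i, AnalyticOnNhd ℝ (fun t => γ t i) (Icc 0 1) := fun i t ht =>
    ((P i).analyticAt _).comp (hanalytic t ht)
  have hder : ∀ i, ∀ t ∈ Icc (0:ℝ) 1, HasDerivAt (fun t => γ t i) (deriv γ t i) t := fun i t ht =>
    (P i).hasFDerivAt.comp_hasDerivAt t (hanalytic t ht).differentiableAt.hasDerivAt
  have hcont : ∀ i, ContinuousOn (fun t => deriv γ t i) (Icc 0 1) := fun i t ht =>
    ((P i).continuous.continuousAt.comp
      (hanalytic t ht).deriv.continuousAt).continuousWithinAt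
  obtain ⟨t, ht, hy, hx⟩ := exists_tangent_of_coordinates (by simp [h0]) (by rw [h1a]; exact ha)
    (by simp [h0]) h1b (hcoord 1) (hder 0) (hder 1) (hcont 0) (hcont 1)
    (fun t ht h0 h1 => hreg t ht (by ext i; fin_cases i <;> simpa))
    (fun s hs t ht h0 h1 => hinj hs ht (by ext i; fin_cases i <;> simpa))
  refine ⟨t, ht, ?_, hy⟩
  rw [EuclideanSpace.norm_eq, Fin.sum_univ_two, hy, norm_zero, Real.norm_eq_abs, sq_abs]
  simp [Real.sqrt_sq hx.le]
end

section
/- (Interior Euler–Lagrange equation for the elastic energy.) Let γ : [0, L] → ℝ² be a smooth (C^∞) arclength-parametrized curve (|γ'(s)| = 1 for all s). For a regular curve c : [0, L] → ℝ² of class H², define its elastic energy E(c) = ∫₀^L |k_c(t)|² |c'(t)| dt + ∫₀^L |c'(t)| dt, where k_c = c''/|c'|² − ⟨c'', c'⟩ c'/|c'|⁴. Suppose γ is a critical point with respect to compactly supported variations: for every ψ ∈ C_c^∞((0, L); ℝ²) the function ε ↦ E(γ + εψ), defined for |ε| small enough that γ + εψ is regular, has vanishing derivative at ε = 0. Then the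 oriented curvature k(s) = ⟨γ''(s), ν(s)⟩, where ν(s) is the counterclockwise rotation of γ'(s) by π/2, satisfies the ordinary differential equation 2 k''(s) + k(s)³ − k(s) = 0 for all s ∈ (0, L). -/
/-!
Only normal variations `ψ = φ ν`, with `φ` a scalar test function and `ν` the rotated tangent, are
needed. In the plane the bending density is `|k_c|² |c'| = det(c', c'')² / |c'|⁵`
(`elasticEnergy_eq`), so the energy can be differentiated under the integral sign
(`hasDerivAt_energy`). At a unit speed curve its first variation along `ψ` is
`∫ 2 k ⟨ν, ψ''⟩ + (1 - 3 k²) ⟨γ', ψ'⟩`, and for `ψ = φ ν` the relations obtained by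
differentiating `|γ'|² = 1` (`frenet`) reduce the integrand to `2 k φ'' + (k³ - k) φ`.
Integrating by parts twice (`integral_mul_deriv_deriv`) gives `∫ (2 k'' + k³ - k) φ = 0` for every
test function `φ` (`normal_variation`), and the fundamental lemma of the calculus of variations,
with the continuity of `2 k'' + k³ - k`, gives the equation at every point of `(0, L)`.
-/

open MeasureTheory Set
open scoped RealInnerProductSpace

/-- The curvature vector of a planar curve `c`, `k_c = c''/|c'|² − ⟨c'', c'⟩ c'/|c'|⁴`. -/
noncomputable def curvVec (c : ℝ → EuclideanSpace ℝ (Fin 2)) (t : ℝ) :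
    EuclideanSpace ℝ (Fin 2) :=
  (‖deriv c t‖ ^ 2)⁻¹ • deriv (deriv c) t
    - (⟪deriv (deriv c) t, deriv c t⟫ / ‖deriv c t‖ ^ 4) • deriv c t

/-- The elastic energy `E(c) = ∫₀^L |k_c|² ds + length(c)` of a curve `c : [0,L] → ℝ²`,
with arclength integrals computed as `∫₀^L f(t) |c'(t)| dt`. -/
noncomputable def elasticEnergy (L : ℝ) (c : ℝ → EuclideanSpace ℝ (Fin 2)) : ℝ :=
  (∫ t in (0:ℝ)..L, ‖curvVec c t‖ ^ 2 * ‖deriv c t‖) + ∫ t in (0:ℝ)..L, ‖deriv c t‖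

/-- The oriented curvature `k = ⟨γ'', ν⟩` of a planar curve, where `ν` is the
counterclockwise rotation of the tangent `γ'` by `π/2`. -/
noncomputable def orientedCurv (γ : ℝ → EuclideanSpace ℝ (Fin 2)) (s : ℝ) : ℝ :=
  (deriv (deriv γ) s) 1 * (deriv γ s) 0 - (deriv (deriv γ) s) 0 * (deriv γ s) 1

/-! ### Differentiation under the integral sign -/

open Filter Topology Interval in
/-- Differentiation under the integral sign at the parameter value `0`, for an integrand that is
`C¹` in the parameter near `{0} × [a, b]` only: by the tube lemma that neighbourhood contains a
compact box `[-δ, δ] × [a, b]`, on which the parameter derivative is bounded. -/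
theorem hasDerivAt_integral_of_continuousOn {a b : ℝ} (hab : a ≤ b) {f f' : ℝ → ℝ → ℝ}
    {U : Set (ℝ × ℝ)} (hU : IsOpen U) (hsub : ∀ t ∈ Icc a b, ((0:ℝ), t) ∈ U)
    (hf : ContinuousOn (fun p : ℝ × ℝ => f p.1 p.2) U)
    (hf' : ContinuousOn (fun p : ℝ × ℝ => f' p.1 p.2) U)
    (hd : ∀ p ∈ U, HasDerivAt (fun ε => f ε p.2) (f' p.1 p.2) p.1) :
    HasDerivAt (fun ε => ∫ t in a..b, f ε t) (∫ t in a..b, f' 0 t) 0 := by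
  obtain ⟨V, W, hV, -, h0V, hW, hVW⟩ := generalized_tube_lemma
    (isCompact_singleton (x := (0:ℝ))) (isCompact_Icc (a := a) (b := b)) hU (by
      rintro ⟨ε, t⟩ ⟨h, ht⟩
      obtain rfl : ε = 0 := h
      exact hsub t ht)
  obtain ⟨δ, hδ, hδV⟩ := Metric.nhds_basis_closedBall.mem_iff.1 (hV.mem_nhds (h0V rfl))
  have hK : Metric.closedBall (0:ℝ) δ ×ˢ Icc a b ⊆ U :=
    (prod_mono hδV hW).trans hVW
  obtain ⟨C, hC⟩ := ((isCompact_closedBall (0:ℝ) δ).prod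
    (isCompact_Icc (a := a) (b := b))).exists_bound_of_continuousOn (hf'.mono hK)
  have slice : ∀ g : ℝ → ℝ → ℝ, ContinuousOn (fun p : ℝ × ℝ => g p.1 p.2) U →
      ∀ ε ∈ Metric.closedBall (0:ℝ) δ, ContinuousOn (g ε) (Icc a b) := fun g hg ε hε =>
    hg.comp (f := fun t => (ε, t)) (by fun_prop) fun t ht => hK ⟨hε, ht⟩
  have hI : Ι a b ⊆ Icc a b := by rw [uIoc_of_le hab]; exact Ioc_subset_Icc_self
  have meas : ∀ g : ℝ → ℝ, ContinuousOn g (Icc a b) →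
      AEStronglyMeasurable g (volume.restrict (Ι a b)) := fun g hg =>
    (hg.mono hI).aestronglyMeasurable measurableSet_uIoc
  have h0 : (0:ℝ) ∈ Metric.closedBall (0:ℝ) δ := Metric.mem_closedBall_self hδ.le
  refine (intervalIntegral.hasDerivAt_integral_of_dominated_loc_of_deriv_le
    (Metric.closedBall_mem_nhds (0:ℝ) hδ) (F' := f') (bound := fun _ => C) ?_ ?_ ?_ ?_ ?_ ?_).2
  · filter_upwards [Metric.closedBall_mem_nhds (0:ℝ) hδ] with ε hε
    exact meas _ (slice f hf ε hε)
  · exact (slice f hf 0 h0).intervalIntegrable_of_Icc hab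
  · exact meas _ (slice f' hf' 0 h0)
  · exact .of_forall fun t ht ε hε => hC (ε, t) ⟨hε, hI ht⟩
  · exact intervalIntegrable_const
  · exact .of_forall fun t ht ε hε => hd (ε, t) (hK ⟨hε, hI ht⟩)

/-! ### The elastic energy in coordinates -/

theorem hasDerivAt_plane {X Y : ℝ → ℝ} {X' Y' t : ℝ} (hX : HasDerivAt X X' t)
    (hY : HasDerivAt Y Y' t) :
    HasDerivAt (fun s => (!₂[X s, Y s] : EuclideanSpace ℝ (Fin 2))) !₂[X', Y'] t := by
  have h : HasDerivAt (fun s => ![X s, Y s]) ![X', Y'] t := by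
    rw [hasDerivAt_pi]
    intro i
    fin_cases i
    · simpa using hX
    · simpa using hY
  exact (PiLp.continuousLinearEquiv 2 ℝ (fun _ : Fin 2 => ℝ)).symm.hasFDerivAt.comp_hasDerivAt t h

/-- In the plane `|k_c|² |c'| = det(c', c'')² / |c'|⁵`, by Lagrange's identity
`|c''|² |c'|² - ⟨c'', c'⟩² = det(c', c'')²`. No regularity `c' ≠ 0` is assumed: where `c' = 0`,
both integrands are `0` by the conventions for division by zero. -/
theorem elasticEnergy_eq (L : ℝ) {X Y X₁ Y₁ X₂ Y₂ : ℝ → ℝ}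
    (hX : ∀ t, HasDerivAt X (X₁ t) t) (hY : ∀ t, HasDerivAt Y (Y₁ t) t)
    (hX₁ : ∀ t, HasDerivAt X₁ (X₂ t) t) (hY₁ : ∀ t, HasDerivAt Y₁ (Y₂ t) t) :
    elasticEnergy L (fun t => !₂[X t, Y t]) =
      (∫ t in (0:ℝ)..L, (Y₂ t * X₁ t - X₂ t * Y₁ t) ^ 2 / √(X₁ t ^ 2 + Y₁ t ^ 2) ^ 5)
        + ∫ t in (0:ℝ)..L, √(X₁ t ^ 2 + Y₁ t ^ 2) := by
  have h1 : deriv (fun t => (!₂[X t, Y t] : EuclideanSpace ℝ (Fin 2)))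
      = fun t => !₂[X₁ t, Y₁ t] := funext fun t => (hasDerivAt_plane (hX t) (hY t)).deriv
  have h2 : deriv (fun t => (!₂[X₁ t, Y₁ t] : EuclideanSpace ℝ (Fin 2)))
      = fun t => !₂[X₂ t, Y₂ t] := funext fun t => (hasDerivAt_plane (hX₁ t) (hY₁ t)).deriv
  have hn : ∀ x y : ℝ, ‖(!₂[x, y] : EuclideanSpace ℝ (Fin 2))‖ = √(x ^ 2 + y ^ 2) := by
    intro x y
    simp [EuclideanSpace.norm_eq, Fin.sum_univ_two]
  unfold elasticEnergy
  congr 1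
  · congr 1
    funext t
    have hr2 : √(X₁ t ^ 2 + Y₁ t ^ 2) ^ 2 = X₁ t ^ 2 + Y₁ t ^ 2 :=
      Real.sq_sqrt (by positivity)
    simp only [curvVec, h1, h2, hn]
    rw [EuclideanSpace.norm_sq_eq]
    simp only [Fin.sum_univ_two, PiLp.inner_apply, PiLp.sub_apply, PiLp.smul_apply,
      smul_eq_mul, Real.norm_eq_abs, sq_abs, Matrix.cons_val_zero, Matrix.cons_val_one,
      RCLike.inner_apply, conj_trivial]
    generalize √(X₁ t ^ 2 + Y₁ t ^ 2) = r at hr2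
    rcases eq_or_ne r 0 with rfl | hr
    · simp
    · field_simp
      simp only [hr2]
      ring
  · simp only [h1, hn]

/-! ### The first variation -/

/-- First variation of the elastic energy at a unit speed curve, in coordinates: `(a, b)` and
`(a₂, b₂)` stand for the first and second derivatives of the curve, `(u, v)` and `(u₂, v₂)` for
those of the variation. -/
theorem hasDerivAt_energy {L : ℝ} (hL : 0 ≤ L) {a b a₂ b₂ u v u₂ v₂ : ℝ → ℝ}
    (ha : Continuous a) (hb : Continuous b) (ha₂ : Continuous a₂) (hb₂ : Continuous b₂)
    (hu : Continuous u) (hv : Continuous v) (hu₂ : Continuous u₂) (hv₂ : Continuous v₂)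
    (h1 : ∀ t ∈ Icc 0 L, a t ^ 2 + b t ^ 2 = 1) :
    HasDerivAt (fun ε : ℝ =>
      (∫ t in (0:ℝ)..L, ((b₂ t + ε * v₂ t) * (a t + ε * u t)
          - (a₂ t + ε * u₂ t) * (b t + ε * v t)) ^ 2
          / √((a t + ε * u t) ^ 2 + (b t + ε * v t) ^ 2) ^ 5)
        + ∫ t in (0:ℝ)..L, √((a t + ε * u t) ^ 2 + (b t + ε * v t) ^ 2))
      (∫ t in (0:ℝ)..L,
        (2 * (b₂ t * a t - a₂ t * b t) * (v₂ t * a t + b₂ t * u t - u₂ t * b t - a₂ t * v t)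
          - 5 * (b₂ t * a t - a₂ t * b t) ^ 2 * (a t * u t + b t * v t)
          + (a t * u t + b t * v t))) 0 := by
  -- the pairs `(ε, t)` at which the varied curve is regular
  set U : Set (ℝ × ℝ) :=
    {p | 0 < (a p.2 + p.1 * u p.2) ^ 2 + (b p.2 + p.1 * v p.2) ^ 2} with hUdef
  have hU : IsOpen U := isOpen_lt (by fun_prop) (by fun_prop)
  have hsub : ∀ t ∈ Icc 0 L, ((0:ℝ), t) ∈ U := by
    intro t ht
    simp [hUdef, h1 t ht]
  have hne : ∀ p ∈ U, √((a p.2 + p.1 * u p.2) ^ 2 + (b p.2 + p.1 * v p.2) ^ 2) ≠ 0 :=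
    fun p hp => (Real.sqrt_pos.2 hp).ne'
  have hS : ∀ p ∈ U, HasDerivAt
      (fun ε => √((a p.2 + ε * u p.2) ^ 2 + (b p.2 + ε * v p.2) ^ 2))
      (((a p.2 + p.1 * u p.2) * u p.2 + (b p.2 + p.1 * v p.2) * v p.2)
        / √((a p.2 + p.1 * u p.2) ^ 2 + (b p.2 + p.1 * v p.2) ^ 2)) p.1 := by
    intro p hp
    have hlin : ∀ c d : ℝ, HasDerivAt (fun ε => c + ε * d) d p.1 := fun c d => by
      simpa using ((hasDerivAt_id p.1).mul_const d).const_add c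
    have := (((hlin (a p.2) (u p.2)).pow 2).add ((hlin (b p.2) (v p.2)).pow 2)).sqrt
      (ne_of_gt hp)
    refine this.congr_deriv ?_
    have hr := hne p hp
    simp only [Pi.add_apply, Pi.pow_apply]
    generalize √((a p.2 + p.1 * u p.2) ^ 2 + (b p.2 + p.1 * v p.2) ^ 2) = r at hr
    field_simp
    push_cast
    ring
  have hlen := hasDerivAt_integral_of_continuousOn hL
    (f := fun ε t => √((a t + ε * u t) ^ 2 + (b t + ε * v t) ^ 2))
    (f' := fun ε t => ((a t + ε * u t) * u t + (b t + ε * v t) * v t)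
        / √((a t + ε * u t) ^ 2 + (b t + ε * v t) ^ 2)) hU hsub
    (by fun_prop) (by fun_prop (disch := assumption)) hS
  have hbend := hasDerivAt_integral_of_continuousOn hL
    (f := fun ε t => ((b₂ t + ε * v₂ t) * (a t + ε * u t)
          - (a₂ t + ε * u₂ t) * (b t + ε * v t)) ^ 2
          / √((a t + ε * u t) ^ 2 + (b t + ε * v t) ^ 2) ^ 5)
    (f' := fun ε t =>
      2 * ((b₂ t + ε * v₂ t) * (a t + ε * u t) - (a₂ t + ε * u₂ t) * (b t + ε * v t))
        * (v₂ t * (a t + ε * u t) + (b₂ t + ε * v₂ t) * u t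
          - u₂ t * (b t + ε * v t) - (a₂ t + ε * u₂ t) * v t)
        / √((a t + ε * u t) ^ 2 + (b t + ε * v t) ^ 2) ^ 5
      - 5 * ((b₂ t + ε * v₂ t) * (a t + ε * u t) - (a₂ t + ε * u₂ t) * (b t + ε * v t)) ^ 2
        * ((a t + ε * u t) * u t + (b t + ε * v t) * v t)
        / √((a t + ε * u t) ^ 2 + (b t + ε * v t) ^ 2) ^ 7) hU hsub
    (ContinuousOn.div (by fun_prop) (by fun_prop) fun p hp => pow_ne_zero _ (hne p hp))
    (ContinuousOn.sub
      (ContinuousOn.div (by fun_prop) (by fun_prop) fun p hp => pow_ne_zero _ (hne p hp))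
      (ContinuousOn.div (by fun_prop) (by fun_prop) fun p hp => pow_ne_zero _ (hne p hp)))
    (by
      intro p hp
      have hlin : ∀ c d : ℝ, HasDerivAt (fun ε => c + ε * d) d p.1 := fun c d => by
        simpa using ((hasDerivAt_id p.1).mul_const d).const_add c
      have hr := hne p hp
      have := ((((hlin (b₂ p.2) (v₂ p.2)).mul (hlin (a p.2) (u p.2))).sub
        ((hlin (a₂ p.2) (u₂ p.2)).mul (hlin (b p.2) (v p.2)))).pow 2).div
        ((hS p hp).pow 5) (pow_ne_zero _ hr)
      refine this.congr_deriv ?_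
      simp only [Pi.mul_apply, Pi.sub_apply, Pi.pow_apply]
      generalize √((a p.2 + p.1 * u p.2) ^ 2 + (b p.2 + p.1 * v p.2) ^ 2) = r at hr
      field_simp
      push_cast
      ring)
  refine (hbend.add hlen).congr_deriv ?_
  have hr : ∀ t ∈ uIcc 0 L, √(a t ^ 2 + b t ^ 2) = 1 := fun t ht => by
    rw [uIcc_of_le hL] at ht
    simp [h1 t ht]
  simp only [zero_mul, add_zero]
  rw [intervalIntegral.integral_add (Continuous.intervalIntegrable (by fun_prop) _ _)
      (Continuous.intervalIntegrable (by fun_prop) _ _)]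
  congr 1 <;> exact intervalIntegral.integral_congr fun t ht => by simp [hr t ht]

/-! ### Normal variations and integration by parts -/

open scoped ContDiff

theorem ContDiff.deriv_and_hasDerivAt {f : ℝ → ℝ} (hf : ContDiff ℝ ∞ f) :
    ContDiff ℝ ∞ (deriv f) ∧ ∀ t, HasDerivAt f (deriv f t) t :=
  have h := contDiff_infty_iff_deriv.1 hf
  ⟨h.2, fun t => (h.1 t).hasDerivAt⟩

/-- Integrating by parts twice: `k φ'' - k'' φ` is the derivative of `k φ' - k' φ`, which vanishes
at both endpoints. -/
theorem integral_mul_deriv_deriv {L : ℝ} {k φ : ℝ → ℝ} (hk : ContDiff ℝ ∞ k)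
    (hφ : ContDiff ℝ ∞ φ) (hsupp : tsupport φ ⊆ Ioo 0 L) :
    ∫ t in (0:ℝ)..L, (k t * deriv (deriv φ) t - deriv (deriv k) t * φ t) = 0 := by
  obtain ⟨hk1, dk⟩ := hk.deriv_and_hasDerivAt
  obtain ⟨hk2, dk1⟩ := hk1.deriv_and_hasDerivAt
  obtain ⟨hφ1, dφ⟩ := hφ.deriv_and_hasDerivAt
  obtain ⟨hφ2, dφ1⟩ := hφ1.deriv_and_hasDerivAt
  have hz : ∀ t, t ∉ Ioo 0 L → φ t = 0 ∧ deriv φ t = 0 := fun t ht =>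
    ⟨image_eq_zero_of_notMem_tsupport fun h => ht (hsupp h),
      image_eq_zero_of_notMem_tsupport fun h => ht (hsupp (tsupport_deriv_subset h))⟩
  have hW : ∀ t ∈ uIcc 0 L, HasDerivAt (fun t => k t * deriv φ t - deriv k t * φ t)
      (k t * deriv (deriv φ) t - deriv (deriv k) t * φ t) t := fun t _ =>
    (((dk t).mul (dφ1 t)).sub ((dk1 t).mul (dφ t))).congr_deriv (by ring)
  have c := hk.continuous
  have c1 := hk2.continuous
  have c2 := hφ.continuous
  have c3 := hφ2.continuous
  rw [intervalIntegral.integral_eq_sub_of_hasDerivAt hW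
    (Continuous.intervalIntegrable (by fun_prop) _ _)]
  simp [hz 0 (by simp), hz L (by simp)]

/-- The first two derivatives of the identity `|(x, y)|² = 1`, where `(x, y)` plays the role of the
unit tangent. -/
theorem frenet {L : ℝ} {x y : ℝ → ℝ} (hx : ContDiff ℝ ∞ x) (hy : ContDiff ℝ ∞ y)
    (h1 : ∀ t ∈ Icc 0 L, x t ^ 2 + y t ^ 2 = 1) {t : ℝ} (ht : t ∈ Ioo 0 L) :
    x t * deriv x t + y t * deriv y t = 0 ∧
    x t * deriv (deriv x) t + y t * deriv (deriv y) t = -(deriv x t ^ 2 + deriv y t ^ 2) := by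
  obtain ⟨hx1, dx⟩ := hx.deriv_and_hasDerivAt
  obtain ⟨hy1, dy⟩ := hy.deriv_and_hasDerivAt
  obtain ⟨hx2, dx1⟩ := hx1.deriv_and_hasDerivAt
  obtain ⟨hy2, dy1⟩ := hy1.deriv_and_hasDerivAt
  have key : ∀ {f : ℝ → ℝ} {f' c t : ℝ}, t ∈ Ioo 0 L → (∀ s ∈ Ioo 0 L, f s = c) →
      HasDerivAt f f' t → f' = 0 := fun {f f' c t} ht hc hf =>
    hf.unique ((hasDerivAt_const t c).congr_of_eventuallyEq
      (Filter.mem_of_superset (isOpen_Ioo.mem_nhds ht) hc))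
  have e2 : ∀ s ∈ Ioo 0 L, x s * deriv x s + y s * deriv y s = 0 := fun s hs => by
    have := key hs (fun s hs => h1 s (Ioo_subset_Icc_self hs))
      (((dx s).pow 2).add ((dy s).pow 2))
    norm_num at this
    linarith
  refine ⟨e2 t ht, ?_⟩
  have := key ht e2 (((dx t).mul (dx1 t)).add ((dy t).mul (dy1 t)))
  linarith

/-- If the elastic energy of the unit speed curve `(x, y)` is stationary under the normal variation
`φ ν`, where `ν = (-y', x')`, then `2 k'' + k³ - k` is orthogonal to `φ`. -/
theorem normal_variation {L : ℝ} (hL : 0 < L) {x y φ k : ℝ → ℝ}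
    (hx : ContDiff ℝ ∞ x) (hy : ContDiff ℝ ∞ y) (hφ : ContDiff ℝ ∞ φ)
    (hsupp : tsupport φ ⊆ Ioo 0 L)
    (h1 : ∀ t ∈ Icc 0 L, deriv x t ^ 2 + deriv y t ^ 2 = 1)
    (hk : k = fun t => deriv (deriv y) t * deriv x t - deriv (deriv x) t * deriv y t)
    (hcrit : HasDerivAt (fun ε => elasticEnergy L
      (fun t => !₂[x t + ε * -(φ t * deriv y t), y t + ε * (φ t * deriv x t)])) 0 0) :
    ∫ t in (0:ℝ)..L, φ t * (2 * deriv (deriv k) t + k t ^ 3 - k t) = 0 := by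
  obtain ⟨hx1, dx⟩ := hx.deriv_and_hasDerivAt
  obtain ⟨hx2, dx1⟩ := hx1.deriv_and_hasDerivAt
  obtain ⟨hx3, dx2⟩ := hx2.deriv_and_hasDerivAt
  obtain ⟨hy1, dy⟩ := hy.deriv_and_hasDerivAt
  obtain ⟨hy2, dy1⟩ := hy1.deriv_and_hasDerivAt
  obtain ⟨hy3, dy2⟩ := hy2.deriv_and_hasDerivAt
  obtain ⟨hφ1, dφ⟩ := hφ.deriv_and_hasDerivAt
  obtain ⟨hφ2, dφ1⟩ := hφ1.deriv_and_hasDerivAt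
  have hks : ContDiff ℝ ∞ k := by rw [hk]; fun_prop
  have hk2 : ContDiff ℝ ∞ (deriv (deriv k)) :=
    hks.deriv_and_hasDerivAt.1.deriv_and_hasDerivAt.1
  have hfr := fun t => frenet (t := t) hx1 hy1 h1
  have hibp := integral_mul_deriv_deriv hks hφ hsupp
  generalize deriv (deriv k) = k₂ at *
  generalize deriv (deriv (deriv x)) = x₃ at *
  generalize deriv (deriv (deriv y)) = y₃ at *
  generalize deriv (deriv x) = x₂ at *
  generalize deriv (deriv y) = y₂ at *
  generalize deriv x = x₁ at *
  generalize deriv y = y₁ at *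
  generalize deriv (deriv φ) = φ₂ at *
  generalize deriv φ = φ₁ at *
  have cx1 := hx1.continuous
  have cx2 := hx2.continuous
  have cx3 := hx3.continuous
  have cy1 := hy1.continuous
  have cy2 := hy2.continuous
  have cy3 := hy3.continuous
  have cφ := hφ.continuous
  have cφ1 := hφ1.continuous
  have cφ2 := hφ2.continuous
  have ck := hks.continuous
  have ck2 := hk2.continuous
  have hvar := hasDerivAt_energy hL.le cx1 cy1 cx2 cy2
    (u := fun t => -(φ₁ t * y₁ t + φ t * y₂ t)) (v := fun t => φ₁ t * x₁ t + φ t * x₂ t)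
    (u₂ := fun t => -(φ₂ t * y₁ t + 2 * φ₁ t * y₂ t + φ t * y₃ t))
    (v₂ := fun t => φ₂ t * x₁ t + 2 * φ₁ t * x₂ t + φ t * x₃ t)
    (by fun_prop) (by fun_prop) (by fun_prop) (by fun_prop) h1
  have hE := fun ε : ℝ => elasticEnergy_eq L
    (X := fun t => x t + ε * -(φ t * y₁ t)) (Y := fun t => y t + ε * (φ t * x₁ t))
    (X₁ := fun t => x₁ t + ε * -(φ₁ t * y₁ t + φ t * y₂ t))
    (Y₁ := fun t => y₁ t + ε * (φ₁ t * x₁ t + φ t * x₂ t))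
    (X₂ := fun t => x₂ t + ε * -(φ₂ t * y₁ t + 2 * φ₁ t * y₂ t + φ t * y₃ t))
    (Y₂ := fun t => y₂ t + ε * (φ₂ t * x₁ t + 2 * φ₁ t * x₂ t + φ t * x₃ t))
    (fun t => (dx t).add (((dφ t).mul (dy1 t)).neg.const_mul ε))
    (fun t => (dy t).add (((dφ t).mul (dx1 t)).const_mul ε))
    (fun t => ((dx1 t).add ((((dφ1 t).mul (dy1 t)).add
      ((dφ t).mul (dy2 t))).neg.const_mul ε)).congr_deriv (by ring))
    (fun t => ((dy1 t).add ((((dφ1 t).mul (dx1 t)).add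
      ((dφ t).mul (dx2 t))).const_mul ε)).congr_deriv (by ring))
  simp only [hE] at hcrit
  have h0 := hvar.unique hcrit
  -- For `ψ = φ ν` the first variation density is `2 k φ'' + (k³ - k) φ` on `(0, L)`.
  rw [intervalIntegral.integral_congr_uIoo (g := fun t =>
    2 * (k t * φ₂ t - k₂ t * φ t) + φ t * (2 * k₂ t + k t ^ 3 - k t))] at h0
  · rw [intervalIntegral.integral_add (Continuous.intervalIntegrable (by fun_prop) _ _)
      (Continuous.intervalIntegrable (by fun_prop) _ _), intervalIntegral.integral_const_mul,
      hibp] at h0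
    simpa using h0
  · intro t ht
    rw [uIoo_of_le hL.le] at ht
    obtain ⟨e2, e3⟩ := hfr t ht
    have e1 := h1 t (Ioo_subset_Icc_self ht)
    have hkt : k t = y₂ t * x₁ t - x₂ t * y₁ t := by rw [hk]
    -- `|γ''|² = k²`, since `γ''` is normal to the unit tangent
    have ek : x₂ t ^ 2 + y₂ t ^ 2 = k t ^ 2 := by
      rw [hkt]
      linear_combination (-(x₂ t ^ 2 + y₂ t ^ 2)) * e1
        + (x₁ t * x₂ t + y₁ t * y₂ t) * e2
    -- the variation of `det(γ', γ'')` is `φ'' - 2 k² φ`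
    have ed : (φ₂ t * x₁ t + 2 * φ₁ t * x₂ t + φ t * x₃ t) * x₁ t
        + y₂ t * -(φ₁ t * y₁ t + φ t * y₂ t)
        - -(φ₂ t * y₁ t + 2 * φ₁ t * y₂ t + φ t * y₃ t) * y₁ t
        - x₂ t * (φ₁ t * x₁ t + φ t * x₂ t) = φ₂ t - 2 * k t ^ 2 * φ t := by
      linear_combination φ₂ t * e1 + φ₁ t * e2 + φ t * e3 - 2 * φ t * ek
    -- the variation of `|γ'|` is `-k φ`
    have es : x₁ t * -(φ₁ t * y₁ t + φ t * y₂ t) + y₁ t * (φ₁ t * x₁ t + φ t * x₂ t)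
        = -(k t * φ t) := by
      rw [hkt]; ring
    simp only [ed, es, ← hkt]
    ring

/-! ### The Euler–Lagrange equation -/

/-- **Interior Euler–Lagrange equation.** If `γ : [0,L] → ℝ²` is a smooth
arclength-parametrized curve which is critical for the elastic energy with respect to all
smooth variations compactly supported in `(0,L)`, then its oriented curvature satisfies
`2 k'' + k³ − k = 0` on `(0,L)`. -/
theorem euler_lagrange_elastic
    (L : ℝ) (γ : ℝ → EuclideanSpace ℝ (Fin 2))
    (hsmooth : ∀ n : ℕ, ContDiff ℝ n γ)
    (harclength : ∀ s ∈ Icc (0:ℝ) L, ‖deriv γ s‖ = 1)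
    (hcritical : ∀ ψ : ℝ → EuclideanSpace ℝ (Fin 2), (∀ n : ℕ, ContDiff ℝ n ψ) →
      tsupport ψ ⊆ Ioo (0:ℝ) L →
      HasDerivAt (fun ε : ℝ => elasticEnergy L (fun t => γ t + ε • ψ t)) 0 0) :
    ∀ s ∈ Ioo (0:ℝ) L,
      2 * deriv (deriv (orientedCurv γ)) s + (orientedCurv γ s) ^ 3 - orientedCurv γ s
        = 0 := by
  intro s hs
  have hL : 0 < L := hs.1.trans hs.2
  have hγ : ContDiff ℝ ∞ γ := contDiff_infty.2 hsmooth
  set x : ℝ → ℝ := fun t => γ t 0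
  set y : ℝ → ℝ := fun t => γ t 1
  have hx : ContDiff ℝ ∞ x := contDiff_euclidean.1 hγ 0
  have hy : ContDiff ℝ ∞ y := contDiff_euclidean.1 hγ 1
  obtain ⟨hx1, dx⟩ := hx.deriv_and_hasDerivAt
  obtain ⟨hx2, dx1⟩ := hx1.deriv_and_hasDerivAt
  obtain ⟨hy1, dy⟩ := hy.deriv_and_hasDerivAt
  obtain ⟨hy2, dy1⟩ := hy1.deriv_and_hasDerivAt
  have hγxy : γ = fun t => !₂[x t, y t] := by
    funext t
    ext i
    fin_cases i <;> rfl
  have hd1 : deriv γ = fun t => !₂[deriv x t, deriv y t] := by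
    rw [hγxy]
    exact funext fun t => (hasDerivAt_plane (dx t) (dy t)).deriv
  have hd2 : deriv (deriv γ) = fun t => !₂[deriv (deriv x) t, deriv (deriv y) t] := by
    rw [hd1]
    exact funext fun t => (hasDerivAt_plane (dx1 t) (dy1 t)).deriv
  have hk : orientedCurv γ
      = fun t => deriv (deriv y) t * deriv x t - deriv (deriv x) t * deriv y t := by
    funext t
    rw [orientedCurv, hd2, hd1]
    simp
  have h1 : ∀ t ∈ Icc 0 L, deriv x t ^ 2 + deriv y t ^ 2 = 1 := by
    intro t ht
    have h := EuclideanSpace.norm_sq_eq (deriv γ t)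
    rw [harclength t ht, hd1] at h
    simpa [Fin.sum_univ_two] using h.symm
  have hks : ContDiff ℝ ∞ (orientedCurv γ) := by rw [hk]; fun_prop
  have hk2 : ContDiff ℝ ∞ (deriv (deriv (orientedCurv γ))) :=
    hks.deriv_and_hasDerivAt.1.deriv_and_hasDerivAt.1
  have ck := hks.continuous
  have ck2 := hk2.continuous
  have hcont : Continuous fun t =>
      2 * deriv (deriv (orientedCurv γ)) t + (orientedCurv γ t) ^ 3 - orientedCurv γ t := by
    fun_prop
  have hae := isOpen_Ioo.ae_eq_zero_of_integral_contDiff_smul_eq_zero (μ := volume)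
    (U := Ioo (0:ℝ) L) (hcont.locallyIntegrable.locallyIntegrableOn _) (by
      intro φ hφ _ hsupp
      have hψ : Function.support (fun t =>
          (!₂[-(φ t * deriv y t), φ t * deriv x t] : EuclideanSpace ℝ (Fin 2)))
          ⊆ Function.support φ := fun t ht h0 => ht (by
        ext i
        fin_cases i <;> simp [h0])
      have hcrit := hcritical (fun t => !₂[-(φ t * deriv y t), φ t * deriv x t])
        (contDiff_infty.1 (contDiff_euclidean.2 fun i => by
          fin_cases i
          · exact (hφ.mul hy1).neg
          · exact hφ.mul hx1))
        ((closure_mono hψ).trans hsupp)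
      have hv : ∀ ε : ℝ, (fun t => γ t + ε • (!₂[-(φ t * deriv y t), φ t * deriv x t] :
          EuclideanSpace ℝ (Fin 2)))
          = fun t => !₂[x t + ε * -(φ t * deriv y t), y t + ε * (φ t * deriv x t)] := by
        intro ε
        funext t
        ext i
        fin_cases i <;> simp [x, y]
      simp only [hv] at hcrit
      rw [← normal_variation hL hx hy hφ hsupp h1 hk hcrit,
        intervalIntegral.integral_of_le hL.le, integral_Ioc_eq_integral_Ioo,
        setIntegral_eq_integral_of_forall_compl_eq_zero]
      · rfl
      · intro t ht
        rw [image_eq_zero_of_notMem_tsupport fun h => ht (hsupp h), zero_mul])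
  exact Measure.eqOn_open_of_ae_eq ((ae_restrict_iff' measurableSet_Ioo).2 hae) isOpen_Ioo
    hcont.continuousOn continuousOn_const hs
end

section
/- (Lower semicontinuity of the elastic energy along C¹-converging curves.) Let d ≥ 2. For each n let γₙ : [0,1] → ℝ^d be of class H² with constant speed ℓₙ > 0, and let γ_∞ : [0,1] → ℝ^d be of class H² with constant speed ℓ_∞ > 0. Suppose γₙ → γ_∞ and γₙ' → γ_∞' uniformly on [0,1]. Then the elastic energy is lower semicontinuous: ℓ_∞^{-3} ∫₀¹ |γ_∞''(t)|² dt + ℓ_∞ ≤ liminf_{n→∞} ( ℓₙ^{-3} ∫₀¹ |γₙ''(t)|² dt + ℓₙ ). -/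
/-!
The energy is, up to the convergent factors `ℓₙ⁻³` and summands `ℓₙ`, the squared `L²` norm of
`γₙ''`, so the point is lower semicontinuity of that norm when the primitives `γₙ'` converge
pointwise. Instead of extracting a weak limit, extend the second derivatives by zero and compare
them with their right averages `A_h f (t) = h⁻¹ ∫_t^{t+h} f`. Averaging does not increase the
`L²` norm (`lintegral_average_sq_le`: Cauchy–Schwarz and Tonelli). For fixed `h`, convergence of
the primitives gives `A_h fₙ → A_h f` pointwise, whence `‖A_h f‖² ≤ liminf ‖fₙ‖²` by Fatou. As
`h → 0`, `A_h f → f` almost everywhere by Lebesgue's differentiation theorem, and a second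
application of Fatou gives `‖f‖² ≤ liminf ‖fₙ‖²` (`lintegral_sq_le_liminf`).
-/

open MeasureTheory Set Filter

open Topology ENNReal

theorem ennreal_liminf_add_le (u v : ℕ → ℝ≥0∞) :
    liminf u atTop + liminf v atTop ≤ liminf (fun n => u n + v n) atTop := by
  have hmono (w : ℕ → ℝ≥0∞) : Monotone fun n => ⨅ i ≥ n, w i := fun _ _ hmn =>
    le_iInf₂ fun i hi => iInf₂_le i (hmn.trans hi)
  rw [liminf_eq_iSup_iInf_of_nat, liminf_eq_iSup_iInf_of_nat, liminf_eq_iSup_iInf_of_nat,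
    ENNReal.iSup_add_iSup_of_monotone (hmono u) (hmono v)]
  exact iSup_mono fun n => le_iInf₂ fun i hi => add_le_add (iInf₂_le i hi) (iInf₂_le i hi)

/-- Cauchy–Schwarz against the constant `1` on a window of length `h`. -/
theorem sq_setLIntegral_Ioc_le {g : ℝ → ℝ≥0∞} (hg : AEMeasurable g) (t h : ℝ) :
    (∫⁻ s in Ioc t (t + h), g s) ^ 2 ≤ ENNReal.ofReal h * ∫⁻ s in Ioc t (t + h), g s ^ 2 := by
  have hcs := ENNReal.lintegral_mul_le_Lp_mul_Lq (volume.restrict (Ioc t (t + h)))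
    Real.HolderConjugate.two_two hg.restrict (aemeasurable_const (b := (1 : ℝ≥0∞)))
  simp only [Pi.mul_apply, mul_one, lintegral_const, Measure.restrict_apply_univ,
    Real.volume_Ioc, add_sub_cancel_left, rpow_two] at hcs
  calc _ ≤ _ := pow_le_pow_left₀ zero_le hcs 2
    _ = _ := by
      rw [mul_pow, ← rpow_two, ← rpow_two, ← rpow_mul, ← rpow_mul]
      norm_num
      rw [mul_comm]

/-- Tonelli: integrating the mass of `(t, t + h]` over all `t` counts every point with
weight `h`. -/
theorem lintegral_setLIntegral_Ioc {g : ℝ → ℝ≥0∞} (hg : AEMeasurable g) (h : ℝ) :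
    ∫⁻ t, ∫⁻ s in Ioc t (t + h), g s = ENNReal.ofReal h * ∫⁻ s, g s := by
  have hS : MeasurableSet {p : ℝ × ℝ | p.2 ∈ Ioc p.1 (p.1 + h)} :=
    (measurableSet_lt measurable_fst measurable_snd).inter
      (measurableSet_le measurable_snd (measurable_fst.add_const h))
  have hm : AEMeasurable (Function.uncurry fun t s : ℝ => (Ioc t (t + h)).indicator g s)
      (volume.prod volume) :=
    (hg.comp_quasiMeasurePreserving Measure.quasiMeasurePreserving_snd).indicator hS
  have hswap (t s : ℝ) :
      (Ioc t (t + h)).indicator g s = (Ico (s - h) s).indicator (fun _ => g s) t := by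
    simp only [indicator, mem_Ioc, mem_Ico, sub_le_iff_le_add, and_comm]
  calc _ = ∫⁻ t, ∫⁻ s, (Ioc t (t + h)).indicator g s := by
        simp only [lintegral_indicator measurableSet_Ioc]
    _ = ∫⁻ s, ∫⁻ t, (Ioc t (t + h)).indicator g s := lintegral_lintegral_swap hm
    _ = ∫⁻ s, g s * ENNReal.ofReal h := by
        simp only [hswap, lintegral_indicator_const measurableSet_Ico, Real.volume_Ico,
          sub_sub_self]
    _ = _ := by rw [lintegral_mul_const'' _ hg, mul_comm]

section

variable {E : Type*} [NormedAddCommGroup E] [NormedSpace ℝ E]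

/-- Averaging over the window `(t, t + h]` is a contraction of `L²(ℝ)`. -/
theorem lintegral_average_sq_le {f : ℝ → E} (hf : Integrable f) {h : ℝ} (hh : 0 < h) :
    ∫⁻ t, ‖h⁻¹ • ∫ s in t..(t + h), f s‖ₑ ^ 2 ≤ ∫⁻ s, ‖f s‖ₑ ^ 2 := by
  have hm : AEMeasurable (fun s => ‖f s‖ₑ) := hf.aestronglyMeasurable.enorm
  have hpt (t : ℝ) : ‖h⁻¹ • ∫ s in t..(t + h), f s‖ₑ ^ 2 ≤
      (ENNReal.ofReal h)⁻¹ * ∫⁻ s in Ioc t (t + h), ‖f s‖ₑ ^ 2 := by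
    have h0 : ENNReal.ofReal h ≠ 0 := by simpa using hh
    rw [enorm_smul, intervalIntegral.integral_of_le (by linarith), mul_pow,
      Real.enorm_of_nonneg (by positivity), ENNReal.ofReal_inv_of_pos hh]
    calc _ ≤ (ENNReal.ofReal h)⁻¹ ^ 2 *
          (ENNReal.ofReal h * ∫⁻ s in Ioc t (t + h), ‖f s‖ₑ ^ 2) := by
          gcongr
          exact (pow_le_pow_left₀ zero_le (enorm_integral_le_lintegral_enorm _) 2).trans
            (sq_setLIntegral_Ioc_le hm t h)
      _ = _ := by
          rw [pow_two, mul_assoc, ← mul_assoc (ENNReal.ofReal h)⁻¹ (ENNReal.ofReal h),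
            ENNReal.inv_mul_cancel h0 ofReal_ne_top, one_mul]
  calc _ ≤ ∫⁻ t, (ENNReal.ofReal h)⁻¹ * ∫⁻ s in Ioc t (t + h), ‖f s‖ₑ ^ 2 := lintegral_mono hpt
    _ = (ENNReal.ofReal h)⁻¹ * ∫⁻ t, ∫⁻ s in Ioc t (t + h), ‖f s‖ₑ ^ 2 :=
        lintegral_const_mul' _ _ (by simpa using hh)
    _ = _ := by
        rw [lintegral_setLIntegral_Ioc (hm.pow_const 2), ← mul_assoc,
          ENNReal.inv_mul_cancel (by simpa using hh) ofReal_ne_top, one_mul]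

theorem continuous_integral_window {f : ℝ → E} (hf : Integrable f) (h : ℝ) :
    Continuous fun t => ∫ s in t..(t + h), f s := by
  have hc : Continuous fun t => ∫ s in (0 : ℝ)..t, f s :=
    intervalIntegral.continuous_primitive (fun _ _ => hf.intervalIntegrable) 0
  have : (fun t => ∫ s in t..(t + h), f s) =
      fun t => (∫ s in (0 : ℝ)..(t + h), f s) - ∫ s in (0 : ℝ)..t, f s := by
    ext t
    exact (intervalIntegral.integral_interval_sub_left
      hf.intervalIntegrable hf.intervalIntegrable).symm
  rw [this]
  exact (hc.comp (continuous_add_const h)).sub hc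

/-- The `L²` norm is lower semicontinuous along sequences whose primitives converge pointwise. -/
theorem lintegral_sq_le_liminf [CompleteSpace E] {F : ℕ → ℝ → E} {f : ℝ → E}
    (hF : ∀ n, Integrable (F n)) (hf : Integrable f)
    (hlim : ∀ b, Tendsto (fun n => ∫ s in (0 : ℝ)..b, F n s) atTop (𝓝 (∫ s in (0 : ℝ)..b, f s))) :
    ∫⁻ s, ‖f s‖ₑ ^ 2 ≤ liminf (fun n => ∫⁻ s, ‖F n s‖ₑ ^ 2) atTop := by
  have hcont {g : ℝ → E} (hg : Integrable g) (h : ℝ) :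
      Measurable fun t => ‖h⁻¹ • ∫ s in t..(t + h), g s‖ₑ ^ 2 :=
    ((continuous_enorm.comp ((continuous_integral_window hg h).const_smul h⁻¹)).measurable).pow_const
      2
  have hfixed {h : ℝ} (hh : 0 < h) : ∫⁻ t, ‖h⁻¹ • ∫ s in t..(t + h), f s‖ₑ ^ 2 ≤
      liminf (fun n => ∫⁻ s, ‖F n s‖ₑ ^ 2) atTop := by
    have hpt (t : ℝ) : Tendsto (fun n => ‖h⁻¹ • ∫ s in t..(t + h), F n s‖ₑ ^ 2) atTop
        (𝓝 (‖h⁻¹ • ∫ s in t..(t + h), f s‖ₑ ^ 2)) := by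
      refine ENNReal.Tendsto.pow (Tendsto.enorm (Tendsto.const_smul ?_ _))
      have := (hlim (t + h)).sub (hlim t)
      simpa only [intervalIntegral.integral_interval_sub_left
        (hF _).intervalIntegrable (hF _).intervalIntegrable,
        intervalIntegral.integral_interval_sub_left
        hf.intervalIntegrable hf.intervalIntegrable] using this
    calc _ = ∫⁻ t, liminf (fun n => ‖h⁻¹ • ∫ s in t..(t + h), F n s‖ₑ ^ 2) atTop :=
          lintegral_congr fun t => (hpt t).liminf_eq.symm
      _ ≤ liminf (fun n => ∫⁻ t, ‖h⁻¹ • ∫ s in t..(t + h), F n s‖ₑ ^ 2) atTop :=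
          lintegral_liminf_le fun n => hcont (hF n) h
      _ ≤ _ := liminf_le_liminf (Eventually.of_forall fun n => lintegral_average_sq_le (hF n) hh)
  -- Fatou needs a sequence of window lengths tending to `0`.
  let r : ℕ → ℝ := fun k => 1 / ((k : ℝ) + 1)
  have hr (k : ℕ) : 0 < r k := Nat.one_div_pos_of_nat
  have hr0 : Tendsto r atTop (𝓝[>] 0) := tendsto_nhdsWithin_iff.2
    ⟨tendsto_one_div_add_atTop_nhds_zero_nat, Eventually.of_forall hr⟩
  have hae : ∀ᵐ t, liminf (fun k => ‖(r k)⁻¹ • ∫ s in t..(t + r k), f s‖ₑ ^ 2) atTop =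
      ‖f t‖ₑ ^ 2 := by
    filter_upwards [LocallyIntegrable.ae_hasDerivAt_integral hf.locallyIntegrable] with t ht
    have := ((ht t).tendsto_slope_zero_right).comp hr0
    simp only [intervalIntegral.integral_same, sub_zero] at this
    exact (ENNReal.Tendsto.pow this.enorm).liminf_eq
  calc _ = ∫⁻ t, liminf (fun k => ‖(r k)⁻¹ • ∫ s in t..(t + r k), f s‖ₑ ^ 2) atTop :=
        (lintegral_congr_ae hae).symm
    _ ≤ liminf (fun k => ∫⁻ t, ‖(r k)⁻¹ • ∫ s in t..(t + r k), f s‖ₑ ^ 2) atTop :=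
        lintegral_liminf_le fun k => hcont hf (r k)
    _ ≤ liminf (fun _ : ℕ => liminf (fun n => ∫⁻ s, ‖F n s‖ₑ ^ 2) atTop) atTop :=
        liminf_le_liminf (Eventually.of_forall fun k => hfixed (hr k))
    _ = _ := liminf_const _

/-- The primitive of the extension by zero is the primitive on `[0,1]`, continued by constants. -/
theorem integral_indicator_Ioc_zero_one (g : ℝ → E) (b : ℝ) :
    ∫ s in (0 : ℝ)..b, (Ioc (0 : ℝ) 1).indicator g s = ∫ s in (0 : ℝ)..(max 0 (min b 1)), g s := by
  rcases le_total 0 b with hb | hb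
  · rw [max_eq_right (le_min hb zero_le_one), intervalIntegral.integral_of_le hb,
      intervalIntegral.integral_of_le (le_min hb zero_le_one),
      setIntegral_indicator measurableSet_Ioc, Ioc_inter_Ioc, max_self]
  · rw [max_eq_left ((min_le_left _ _).trans hb), intervalIntegral.integral_of_ge hb,
      setIntegral_indicator measurableSet_Ioc, Ioc_inter_Ioc]
    simp [hb]

end

theorem ofReal_integral_norm_sq {E : Type*} [NormedAddCommGroup E] {g : ℝ → E}
    (hg : IntervalIntegrable (fun t => ‖g t‖ ^ 2) volume 0 1) :
    ENNReal.ofReal (∫ t in (0 : ℝ)..1, ‖g t‖ ^ 2) =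
      ∫⁻ t, ‖(Ioc (0 : ℝ) 1).indicator g t‖ₑ ^ 2 := by
  have hind (t : ℝ) : ‖(Ioc (0 : ℝ) 1).indicator g t‖ₑ ^ 2 =
      (Ioc (0 : ℝ) 1).indicator (fun t => ‖g t‖ₑ ^ 2) t := by
    by_cases h : t ∈ Ioc (0 : ℝ) 1 <;> simp [h]
  rw [intervalIntegral.integral_of_le zero_le_one, ofReal_integral_eq_lintegral_ofReal
    ((intervalIntegrable_iff_integrableOn_Ioc_of_le zero_le_one).1 hg)
    (ae_of_all _ fun t => by positivity)]
  simp only [hind, lintegral_indicator measurableSet_Ioc]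
  simp only [ENNReal.ofReal_pow (norm_nonneg _), ofReal_norm]

/-- **Lower semicontinuity of the elastic energy.** If `H²` curves
`γₙ : [0,1] → ℝ^d` with constant speeds `ℓₙ > 0` converge, together with their derivatives,
uniformly on `[0,1]` to an `H²` curve `γ_lim` with constant speed `ℓ_lim > 0`, then
`ℓ_lim⁻³ ∫₀¹ ‖γ_lim''‖² + ℓ_lim ≤ liminf (ℓₙ⁻³ ∫₀¹ ‖γₙ''‖² + ℓₙ)` (the `liminf` being
taken in `[0,∞]` to allow unbounded energies). -/
theorem elastic_energy_lower_semicontinuous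
    (d : ℕ) (hd : 2 ≤ d)
    (γ γ' γ'' : ℕ → ℝ → EuclideanSpace ℝ (Fin d)) (ℓ : ℕ → ℝ)
    (γlim γlim' γlim'' : ℝ → EuclideanSpace ℝ (Fin d)) (ℓlim : ℝ)
    (hℓ : ∀ n, 0 < ℓ n) (hℓlim : 0 < ℓlim)
    (hderiv : ∀ n, ∀ t ∈ Icc (0:ℝ) 1, HasDerivWithinAt (γ n) (γ' n t) (Icc (0:ℝ) 1) t)
    (hAC : ∀ n, ∀ t ∈ Icc (0:ℝ) 1, γ' n t = γ' n 0 + ∫ s in (0:ℝ)..t, γ'' n s)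
    (hint1 : ∀ n, IntervalIntegrable (γ'' n) volume 0 1)
    (hint2 : ∀ n, IntervalIntegrable (fun t => ‖γ'' n t‖ ^ 2) volume 0 1)
    (hspeed : ∀ n, ∀ t ∈ Icc (0:ℝ) 1, ‖γ' n t‖ = ℓ n)
    (hderivlim : ∀ t ∈ Icc (0:ℝ) 1, HasDerivWithinAt γlim (γlim' t) (Icc (0:ℝ) 1) t)
    (hAClim : ∀ t ∈ Icc (0:ℝ) 1, γlim' t = γlim' 0 + ∫ s in (0:ℝ)..t, γlim'' s)
    (hint1lim : IntervalIntegrable γlim'' volume 0 1)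
    (hint2lim : IntervalIntegrable (fun t => ‖γlim'' t‖ ^ 2) volume 0 1)
    (hspeedlim : ∀ t ∈ Icc (0:ℝ) 1, ‖γlim' t‖ = ℓlim)
    (hconv : TendstoUniformlyOn γ γlim atTop (Icc (0:ℝ) 1))
    (hconv' : TendstoUniformlyOn (fun n => γ' n) γlim' atTop (Icc (0:ℝ) 1)) :
    ENNReal.ofReal ((ℓlim ^ 3)⁻¹ * (∫ t in (0:ℝ)..1, ‖γlim'' t‖ ^ 2) + ℓlim) ≤
      liminf (fun n =>
        ENNReal.ofReal (((ℓ n) ^ 3)⁻¹ * (∫ t in (0:ℝ)..1, ‖γ'' n t‖ ^ 2) + ℓ n)) atTop := by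
  have h01 : (0 : ℝ) ∈ Icc (0 : ℝ) 1 := ⟨le_rfl, zero_le_one⟩
  have hpt {t : ℝ} (ht : t ∈ Icc (0 : ℝ) 1) : Tendsto (fun n => γ' n t) atTop (𝓝 (γlim' t)) :=
    hconv'.tendsto_at ht
  have hℓconv : Tendsto ℓ atTop (𝓝 ℓlim) := by
    simpa only [hspeed _ 0 h01, hspeedlim 0 h01] using (hpt h01).norm
  have hint {g : ℝ → EuclideanSpace ℝ (Fin d)} (hg : IntervalIntegrable g volume 0 1) :
      Integrable ((Ioc (0 : ℝ) 1).indicator g) :=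
    ((intervalIntegrable_iff_integrableOn_Ioc_of_le zero_le_one).1 hg).integrable_indicator
      measurableSet_Ioc
  -- The primitives of the zero extensions are `γₙ' - γₙ' 0`, which converge pointwise.
  have hmain := lintegral_sq_le_liminf (fun n => hint (hint1 n)) (hint hint1lim) (fun b => by
    have hb : max 0 (min b 1) ∈ Icc (0 : ℝ) 1 :=
      ⟨le_max_left _ _, max_le zero_le_one (min_le_right _ _)⟩
    simp only [integral_indicator_Ioc_zero_one]
    have := (hpt hb).sub (hpt h01)
    rw [hAClim _ hb, add_sub_cancel_left] at this
    refine this.congr fun n => ?_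
    rw [hAC n _ hb, add_sub_cancel_left])
  simp only [← ofReal_integral_norm_sq hint2lim, ← ofReal_integral_norm_sq (hint2 _)] at hmain
  have hsplit {c l : ℝ} (hl : 0 < l) (hc : 0 ≤ c) : ENNReal.ofReal ((l ^ 3)⁻¹ * c + l) =
      ENNReal.ofReal ((l ^ 3)⁻¹) * ENNReal.ofReal c + ENNReal.ofReal l := by
    rw [ENNReal.ofReal_add (by positivity) hl.le, ENNReal.ofReal_mul (by positivity)]
  have hnn (g : ℝ → EuclideanSpace ℝ (Fin d)) : 0 ≤ ∫ t in (0 : ℝ)..1, ‖g t‖ ^ 2 :=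
    intervalIntegral.integral_nonneg zero_le_one fun t _ => by positivity
  simp only [hsplit hℓlim (hnn _), hsplit (hℓ _) (hnn _)]
  have hc : Tendsto (fun n => ENNReal.ofReal ((ℓ n ^ 3)⁻¹)) atTop
      (𝓝 (ENNReal.ofReal ((ℓlim ^ 3)⁻¹))) :=
    ENNReal.tendsto_ofReal ((hℓconv.pow 3).inv₀ (by positivity))
  have hl : Tendsto (fun n => ENNReal.ofReal (ℓ n)) atTop (𝓝 (ENNReal.ofReal ℓlim)) :=
    ENNReal.tendsto_ofReal hℓconv
  calc _ ≤ liminf (fun n => ENNReal.ofReal ((ℓ n ^ 3)⁻¹)) atTop *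
          liminf (fun n => ENNReal.ofReal (∫ t in (0 : ℝ)..1, ‖γ'' n t‖ ^ 2)) atTop +
          liminf (fun n => ENNReal.ofReal (ℓ n)) atTop := by
        rw [hc.liminf_eq, hl.liminf_eq]
        gcongr
    _ ≤ liminf (fun n => ENNReal.ofReal ((ℓ n ^ 3)⁻¹) *
          ENNReal.ofReal (∫ t in (0 : ℝ)..1, ‖γ'' n t‖ ^ 2)) atTop +
          liminf (fun n => ENNReal.ofReal (ℓ n)) atTop := by
        gcongr
        exact ENNReal.le_liminf_mul
    _ ≤ _ := ennreal_liminf_add_le _ _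
end
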